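/- arXiv:1512.02903 — 2 statements merged into one kernel-verified Lean document; each statement's English description precedes it below -/
import Mathlib

section
/- Let n ≥ 1 and d ≥ 1 be integers, let γ > 1, let z₁,…,z_d ∈ ℝⁿ, and let 0 < δ < 1. Set Q = [−1,1]ⁿ, let U_δ be the open δ-neighborhood of {z₁,…,z_d}, and Q_δ = Q \ U_δ. Then there exists a γ-doubling ball covering 𝒰 of Q_δ in ℝⁿ \ {z₁,…,z_d} consisting of at most d·(3√n·γ)ⁿ·log₂(3nγ/δ) balls. Moreover, 𝒰 can be chosen so that for any two points v, w belonging to the same connected component of Q_δ there is a finite sequence of pairwise distinct balls B_{j₁},…,B_{jℓ} of 𝒰 with v ∈ B_{j₁} and w ∈ B_{jℓ}, such that for each consecutive pair B_{j_m}, B_{j_{m+1}} the intersection B_{j_m} ∩ B_{j_{m+1}} is non-empty, the ratio of their radii is 1/2, 1 or 2, and the intersection contains a ball of radius at least 1/3 of the smaller of the two radii. -/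
open Metric Set

noncomputable section

/-- The unit cube `Q = [-1,1]ⁿ` in `ℝⁿ`. -/
def unitCube (n : ℕ) : Set (EuclideanSpace ℝ (Fin n)) := {x | ∀ i, |x i| ≤ 1}

/-!
Subdivide the unit cube dyadically and attach to each small cube of side `s` the concentric ball of
radius `max √n (3 / 2) * s / 2`. A cube is *far* if its centre is at sup-distance at least about
`b * s / 2` from all the points, where `b = ⌊γ * max √n (3 / 2)⌋ + 1`; then the `γ`-dilated ball
misses the points. Children of far cubes are far, and all cubes of the finest level that meet `Q_δ`
are far, so the maximal far cubes cover `Q_δ`. The family consists of the maximal far cubes together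
with all far cubes that have a neighbour which is not far. Among the latter are the intermediate
levels between neighbouring maximal cubes of different sizes, so that these are joined by chains in
which the level changes by at most one at each step. Per point and level there are at most
`(2b)ⁿ - bⁿ` such cubes, the children of near cubes which are not near themselves, plus a small
correction for `b = 2`.

A connected subset of `Q_δ` is covered by finitely many closed cubes of the finest level. Two such
cubes with a common point of `Q_δ` are joined by moving one coordinate of the index at a time, so
the component of the link graph in which their maximal far cubes lie is constant along the set.
-/

namespace WhitneyCovering

section General

lemma eq_of_isPreconnected_of_finite_closed_cover {X β γ : Type*} [TopologicalSpace X]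
    {S : Set X} (hS : IsPreconnected S) {I : Set β} (hI : I.Finite) {C : β → Set X}
    (hC : ∀ q ∈ I, IsClosed (C q)) (hcover : S ⊆ ⋃ q ∈ I, C q) {label : β → γ}
    (hlabel : ∀ q ∈ I, ∀ q' ∈ I, (S ∩ (C q ∩ C q')).Nonempty → label q = label q') {q q' : β}
    (hq : q ∈ I) (hq' : q' ∈ I) (hSq : (S ∩ C q).Nonempty) (hSq' : (S ∩ C q').Nonempty) :
    label q = label q' := by
  by_contra hne
  let piece (P : β → Prop) : Set X := ⋃ t ∈ {t ∈ I | P t}, C t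
  have piece_closed (P : β → Prop) : IsClosed (piece P) :=
    (hI.subset (sep_subset _ _)).isClosed_biUnion fun t ht => hC t ht.1
  have piece_meets {P : β → Prop} {t : β} (ht : t ∈ I) (hP : P t) (hSt : (S ∩ C t).Nonempty) :
      (S ∩ piece P).Nonempty :=
    hSt.mono (inter_subset_inter_right _
      (subset_biUnion_of_mem (u := C) (show t ∈ {t ∈ I | P t} from ⟨ht, hP⟩)))
  have hsplit : S ⊆ piece (label · = label q) ∪ piece (label · ≠ label q) := by
    intro x hx
    obtain ⟨t, ht, hxt⟩ := mem_iUnion₂.1 (hcover hx)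
    rcases eq_or_ne (label t) (label q) with h | h
    · exact .inl (mem_biUnion (show t ∈ {t ∈ I | _} from ⟨ht, h⟩) hxt)
    · exact .inr (mem_biUnion (show t ∈ {t ∈ I | _} from ⟨ht, h⟩) hxt)
  obtain ⟨x, hxS, hx, hx'⟩ := isPreconnected_closed_iff.1 hS _ _ (piece_closed _) (piece_closed _)
    hsplit (piece_meets hq rfl hSq) (piece_meets hq' (Ne.symm hne) hSq')
  obtain ⟨t, ⟨ht, htq⟩, hxt⟩ := mem_iUnion₂.1 hx
  obtain ⟨t', ⟨ht', htq'⟩, hxt'⟩ := mem_iUnion₂.1 hx'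
  exact htq' ((hlabel t' ht' t ht ⟨x, hxS, hxt', hxt⟩).trans htq)

lemma exists_injective_fin_chain {V : Type*} {G : SimpleGraph V} {F : Finset V}
    (hG : ∀ p q, G.Adj p q → q ∈ F) {p q : V} (hp : p ∈ F) (hpq : G.Reachable p q) :
    ∃ (l : ℕ) (js : Fin (l + 1) → Fin F.card), Function.Injective js ∧
      (F.equivFin.symm (js 0) : V) = p ∧ (F.equivFin.symm (js (Fin.last l)) : V) = q ∧
      ∀ (i : ℕ) (hi : i + 1 < l + 1), G.Adj (F.equivFin.symm (js ⟨i, by omega⟩))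
        (F.equivFin.symm (js ⟨i + 1, hi⟩)) := by
  obtain ⟨w, hw⟩ := hpq.exists_isPath
  have hmem : ∀ i : Fin (w.length + 1), w.getVert i ∈ F := by
    rintro ⟨_ | i, hi⟩
    · simpa using hp
    · exact hG _ _ (w.adj_getVert_succ (by omega))
  refine ⟨w.length, fun i => F.equivFin ⟨w.getVert i, hmem i⟩, fun i j hij => ?_, ?_, ?_, ?_⟩
  · have hvert : w.getVert i = w.getVert j := congrArg Subtype.val (F.equivFin.injective hij)
    exact Fin.ext (hw.getVert_injOn (Nat.lt_succ_iff.1 i.2) (Nat.lt_succ_iff.1 j.2) hvert)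
  · simp
  · simp
  · intro i hi
    simpa using w.adj_getVert_succ (by omega)

lemma dist_le_sqrt_card_mul {ι : Type*} [Fintype ι] {p q : EuclideanSpace ℝ ι} {t : ℝ}
    (ht : 0 ≤ t) (h : ∀ i, |p i - q i| ≤ t) : dist p q ≤ √(Fintype.card ι) * t :=
  calc dist p q = √(∑ i, |p i - q i| ^ 2) := EuclideanSpace.dist_eq p q
    _ ≤ √(∑ _i : ι, t ^ 2) := by gcongr with i; exact h i
    _ = √(Fintype.card ι) * t := by simp [Real.sqrt_sq ht]

lemma closedBall_midpoint_subset_inter {V : Type*} [SeminormedAddCommGroup V] [NormedSpace ℝ V]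
    {x y : V} {r t : ℝ} (h : t + dist x y / 2 ≤ r) :
    closedBall (midpoint ℝ x y) t ⊆ closedBall x r ∩ closedBall y r := by
  have hhalf : ‖(2 : ℝ)‖⁻¹ * dist x y = dist x y / 2 := by rw [Real.norm_two]; ring
  refine subset_inter (closedBall_subset_closedBall' ?_) (closedBall_subset_closedBall' ?_)
  · rwa [dist_midpoint_left, hhalf]
  · rwa [dist_midpoint_right, hhalf]

end General

section BallsLinked

/-- The relation required of consecutive balls of a chain: the radii have ratio `1/2`, `1` or `2`,
and the two closed balls share a ball of a third of the smaller radius. -/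
def BallsLinked {V : Type*} [PseudoMetricSpace V] (x : V) (r : ℝ) (y : V) (s : ℝ) : Prop :=
  (r / s = 1 / 2 ∨ r / s = 1 ∨ r / s = 2) ∧
    ∃ c, closedBall c (min r s / 3) ⊆ closedBall x r ∩ closedBall y s

namespace BallsLinked

variable {V : Type*} [PseudoMetricSpace V] {x y : V} {r s : ℝ}

lemma symm (h : BallsLinked x r y s) : BallsLinked y s x r := by
  obtain ⟨hratio, c, hc⟩ := h
  refine ⟨?_, c, by rwa [min_comm, inter_comm]⟩
  rw [← inv_div r s]
  rcases hratio with h | h | h <;> rw [h] <;> norm_num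

lemma inter_nonempty (h : BallsLinked x r y s) (hr : 0 < r) (hs : 0 < s) :
    (closedBall x r ∩ closedBall y s).Nonempty := by
  obtain ⟨-, c, hc⟩ := h
  exact ⟨c, hc (mem_closedBall_self (by positivity))⟩

lemma of_closedBall_subset {x' : V} (h : BallsLinked x r y r) (hr : 0 < r)
    (hsub : closedBall x r ⊆ closedBall x' (2 * r)) : BallsLinked x' (2 * r) y r := by
  obtain ⟨-, c, hc⟩ := h
  refine ⟨.inr (.inr (mul_div_cancel_right₀ 2 hr.ne')), c, ?_⟩
  rw [min_self] at hc
  rw [min_eq_right (by linarith)]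
  exact hc.trans (inter_subset_inter_left _ hsub)

lemma of_dist_le {V : Type*} [SeminormedAddCommGroup V] [NormedSpace ℝ V] {x y : V} {r : ℝ}
    (hr : 0 < r) (h : dist x y ≤ 4 / 3 * r) : BallsLinked x r y r := by
  refine ⟨.inr (.inl (div_self hr.ne')), midpoint ℝ x y, ?_⟩
  rw [min_self]
  exact closedBall_midpoint_subset_inter (by linarith)

end BallsLinked

/-- The graph on the indices of a family of balls in which two distinct indices in `F` are adjacent
when their balls are linked. -/
def linkGraph {V β : Type*} [PseudoMetricSpace V] (c : β → V) (r : β → ℝ) (F : Set β) :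
    SimpleGraph β where
  Adj p q := p ≠ q ∧ p ∈ F ∧ q ∈ F ∧ BallsLinked (c p) (r p) (c q) (r q)
  symm := ⟨fun _ _ ⟨hne, hp, hq, h⟩ => ⟨hne.symm, hq, hp, h.symm⟩⟩
  loopless := ⟨fun _ h => h.1 rfl⟩

lemma BallsLinked.reachable_linkGraph {V β : Type*} [PseudoMetricSpace V] {c : β → V} {r : β → ℝ}
    {F : Set β} {p q : β} (h : BallsLinked (c p) (r p) (c q) (r q)) (hp : p ∈ F) (hq : q ∈ F) :
    (linkGraph c r F).Reachable p q := by
  rcases eq_or_ne p q with rfl | hne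
  · rfl
  · exact SimpleGraph.Adj.reachable ⟨hne, hp, hq, h⟩

lemma exists_injective_ballsLinked_chain {V β : Type*} [PseudoMetricSpace V] {c : β → V}
    {r : β → ℝ} {F : Finset β} {p q : β} (hp : p ∈ F) (hpq : (linkGraph c r F).Reachable p q) :
    ∃ (l : ℕ) (js : Fin (l + 1) → Fin F.card), Function.Injective js ∧
      (F.equivFin.symm (js 0) : β) = p ∧ (F.equivFin.symm (js (Fin.last l)) : β) = q ∧
      ∀ (i : ℕ) (hi : i + 1 < l + 1),
        BallsLinked (c (F.equivFin.symm (js ⟨i, by omega⟩)))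
          (r (F.equivFin.symm (js ⟨i, by omega⟩))) (c (F.equivFin.symm (js ⟨i + 1, hi⟩)))
          (r (F.equivFin.symm (js ⟨i + 1, hi⟩))) := by
  obtain ⟨l, js, hinj, hfirst, hlast, hadj⟩ :=
    exists_injective_fin_chain (G := linkGraph c r F) (fun _ _ h => h.2.2.1) hp hpq
  exact ⟨l, js, hinj, hfirst, hlast, fun i hi => (hadj i hi).2.2.2⟩

end BallsLinked

section Grid

variable {ι : Type*}

/-- The centre of the cube with index `m` in the grid of side `s` that has a vertex at
`(-1, …, -1)`, the lowest corner of the unit cube. -/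
def gridCenter (s : ℝ) (m : ι → ℤ) : EuclideanSpace ℝ ι :=
  WithLp.toLp 2 fun i => -1 + (m i + 1 / 2) * s

/-- The closed cube with index `m` in the grid of side `s`. -/
def gridCell (s : ℝ) (m : ι → ℤ) : Set (EuclideanSpace ℝ ι) :=
  {p | ∀ i, |p i - gridCenter s m i| ≤ s / 2}

/-- The index, in the grid of side `2 * s`, of the cube containing the cube with index `m` of the
grid of side `s`. -/
def parent (m : ι → ℤ) : ι → ℤ := fun i => m i / 2

/-- The indices of two cubes of one grid that coincide or share a facet. -/
def FaceAdjacent (m m' : ι → ℤ) : Prop :=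
  ∃ i, (∀ j, j ≠ i → m j = m' j) ∧ |m i - m' i| ≤ 1

/-- The indices of the `N ^ card ι` cubes that tile `[-1, 1] ^ ι` in the grid of side `2 / N`. -/
def gridBox (ι : Type*) [Fintype ι] [DecidableEq ι] (N : ℕ) : Finset (ι → ℤ) :=
  Fintype.piFinset fun _ => Finset.Ico 0 (N : ℤ)

lemma gridCenter_apply (s : ℝ) (m : ι → ℤ) (i : ι) :
    gridCenter s m i = -1 + (m i + 1 / 2) * s := rfl

lemma FaceAdjacent.refl [Nonempty ι] (m : ι → ℤ) : FaceAdjacent m m :=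
  ⟨Classical.arbitrary ι, fun _ _ => rfl, by simp⟩

lemma FaceAdjacent.symm {m m' : ι → ℤ} (h : FaceAdjacent m m') : FaceAdjacent m' m := by
  obtain ⟨i, heq, hi⟩ := h
  exact ⟨i, fun j hj => (heq j hj).symm, by rwa [abs_sub_comm]⟩

lemma FaceAdjacent.parent {m m' : ι → ℤ} (h : FaceAdjacent m m') :
    FaceAdjacent (parent m) (parent m') := by
  obtain ⟨i, heq, hi⟩ := h
  refine ⟨i, fun j hj => congrArg (· / 2) (heq j hj), ?_⟩
  rw [abs_le] at hi ⊢
  simp only [WhitneyCovering.parent]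
  omega

lemma parent_mem_gridBox [Fintype ι] [DecidableEq ι] {N : ℕ} {m : ι → ℤ}
    (hm : m ∈ gridBox ι (2 * N)) : parent m ∈ gridBox ι N := by
  simp only [gridBox, Fintype.mem_piFinset, Finset.mem_Ico, parent] at hm ⊢
  intro i
  have := hm i
  omega

lemma card_gridBox [Fintype ι] [DecidableEq ι] (N : ℕ) :
    (gridBox ι N).card = N ^ Fintype.card ι := by
  simp [gridBox, Fintype.card_piFinset]

lemma abs_gridCenter_sub_parent {s : ℝ} (hs : 0 ≤ s) (m : ι → ℤ) (i : ι) :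
    |gridCenter s m i - gridCenter (2 * s) (parent m) i| = s / 2 := by
  have hdiff : gridCenter s m i - gridCenter (2 * s) (parent m) i
      = ((m i - 2 * (m i / 2) : ℤ) - 1 / 2) * s := by
    simp only [gridCenter_apply, parent]
    push_cast
    ring
  rw [hdiff, abs_mul, abs_of_nonneg hs]
  rcases (by omega : m i - 2 * (m i / 2) = 0 ∨ m i - 2 * (m i / 2) = 1) with h | h <;>
    rw [h] <;> norm_num [abs_of_neg] <;> ring

lemma gridCell_subset_gridCell_parent {s : ℝ} (hs : 0 ≤ s) (m : ι → ℤ) :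
    gridCell s m ⊆ gridCell (2 * s) (parent m) := by
  intro p hp i
  have hcenter := abs_gridCenter_sub_parent hs m i
  have htriangle := abs_sub_le (p i) (gridCenter s m i) (gridCenter (2 * s) (parent m) i)
  linarith [hp i]

lemma isClosed_gridCell (s : ℝ) (m : ι → ℤ) : IsClosed (gridCell s m) := by
  simp only [gridCell, ofPred_forall]
  exact isClosed_iInter fun i => isClosed_le (by fun_prop) continuous_const

lemma abs_sub_le_one_of_mem_gridCell {s : ℝ} (hs : 0 < s) {m m' : ι → ℤ} {p : EuclideanSpace ℝ ι}
    (h : p ∈ gridCell s m) (h' : p ∈ gridCell s m') (i : ι) : |m i - m' i| ≤ 1 := by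
  have hreal : |((m i : ℝ) - m' i) * s| ≤ 1 * s := by
    have htriangle := abs_sub_le (gridCenter s m i) (p i) (gridCenter s m' i)
    rw [abs_sub_comm _ (p i)] at htriangle
    calc |((m i : ℝ) - m' i) * s| = |gridCenter s m i - gridCenter s m' i| := by
          simp only [gridCenter_apply]; congr 1; ring
      _ ≤ 1 * s := by linarith [h i, h' i]
  rw [abs_mul, abs_of_pos hs] at hreal
  exact_mod_cast le_of_mul_le_mul_right hreal hs

lemma exists_int_mem_Ico_and_le {N : ℕ} (hN : 0 < N) {w : ℝ} (h0 : 0 ≤ w) (hwN : w ≤ N) :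
    ∃ t ∈ Finset.Ico 0 (N : ℤ), (t : ℝ) ≤ w ∧ w ≤ t + 1 := by
  rcases hwN.eq_or_lt with rfl | hlt
  · exact ⟨N - 1, Finset.mem_Ico.2 (by omega), by simp, by simp⟩
  · refine ⟨⌊w⌋, Finset.mem_Ico.2 ⟨Int.floor_nonneg.2 h0, Int.floor_lt.2 (by simpa using hlt)⟩,
      Int.floor_le w, (Int.lt_floor_add_one w).le⟩

lemma exists_mem_gridBox_mem_gridCell [Fintype ι] [DecidableEq ι] {N : ℕ} (hN : 0 < N)
    {p : EuclideanSpace ℝ ι} (hp : ∀ i, |p i| ≤ 1) :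
    ∃ m ∈ gridBox ι N, p ∈ gridCell (2 / N) m := by
  have hN' : (0 : ℝ) < N := by exact_mod_cast hN
  have hcoord : ∀ i, ∃ t ∈ Finset.Ico 0 (N : ℤ),
      (t : ℝ) ≤ (p i + 1) / (2 / N) ∧ (p i + 1) / (2 / N) ≤ t + 1 := by
    intro i
    obtain ⟨hlow, hhigh⟩ := abs_le.1 (hp i)
    refine exists_int_mem_Ico_and_le hN (div_nonneg (by linarith) (by positivity)) ?_
    rw [div_le_iff₀ (by positivity), mul_div_cancel₀ _ hN'.ne']
    linarith
  choose m hm hlow hhigh using hcoord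
  refine ⟨m, Fintype.mem_piFinset.2 hm, fun i => ?_⟩
  have hlow := (le_div_iff₀ (by positivity)).1 (hlow i)
  have hhigh := (div_le_iff₀ (by positivity)).1 (hhigh i)
  rw [gridCenter_apply, abs_le]
  constructor <;> linarith

variable [Fintype ι]

lemma dist_gridCenter_le_of_faceAdjacent {s : ℝ} (hs : 0 ≤ s) {m m' : ι → ℤ}
    (h : FaceAdjacent m m') : dist (gridCenter s m) (gridCenter s m') ≤ s := by
  obtain ⟨i, heq, hi⟩ := h
  have hoff (j : ι) (hj : j ≠ i) : dist (gridCenter s m j) (gridCenter s m' j) ^ 2 = 0 := by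
    simp [gridCenter_apply, heq j hj]
  have hi : |(m i : ℝ) - m' i| ≤ 1 := by exact_mod_cast hi
  rw [EuclideanSpace.dist_eq, Fintype.sum_eq_single i hoff, Real.sqrt_sq dist_nonneg, Real.dist_eq]
  calc |gridCenter s m i - gridCenter s m' i| = |(m i : ℝ) - m' i| * s := by
        rw [gridCenter_apply, gridCenter_apply, ← abs_of_nonneg hs, ← abs_mul, abs_of_nonneg hs]
        ring_nf
    _ ≤ 1 * s := by gcongr
    _ = s := one_mul s

lemma gridCell_subset_closedBall {s ρ : ℝ} (hs : 0 ≤ s) (hρ : √(Fintype.card ι) ≤ ρ)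
    (m : ι → ℤ) : gridCell s m ⊆ closedBall (gridCenter s m) (ρ * s / 2) := fun p hp =>
  calc dist p (gridCenter s m) ≤ √(Fintype.card ι) * (s / 2) :=
        dist_le_sqrt_card_mul (by positivity) hp
    _ ≤ ρ * (s / 2) := by gcongr
    _ = ρ * s / 2 := by ring

lemma closedBall_subset_closedBall_parent {s ρ : ℝ} (hs : 0 ≤ s) (hρ : √(Fintype.card ι) ≤ ρ)
    (m : ι → ℤ) : closedBall (gridCenter s m) (ρ * s / 2) ⊆
      closedBall (gridCenter (2 * s) (parent m)) (2 * (ρ * s / 2)) := by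
  have hmem : gridCenter s m ∈ closedBall (gridCenter (2 * s) (parent m)) (ρ * s / 2) :=
    calc dist (gridCenter s m) (gridCenter (2 * s) (parent m)) ≤ √(Fintype.card ι) * (s / 2) :=
          dist_le_sqrt_card_mul (by positivity) fun i => (abs_gridCenter_sub_parent hs m i).le
      _ ≤ ρ * (s / 2) := by gcongr
      _ = ρ * s / 2 := by ring
  exact closedBall_subset_closedBall' (by linarith [mem_closedBall.1 hmem])

lemma ballsLinked_of_faceAdjacent {s ρ : ℝ} (hs : 0 < s) (hρ : 3 / 2 ≤ ρ) {m m' : ι → ℤ}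
    (h : FaceAdjacent m m') :
    BallsLinked (gridCenter s m) (ρ * s / 2) (gridCenter s m') (ρ * s / 2) := by
  have hdist := dist_gridCenter_le_of_faceAdjacent hs.le h
  have hside : 3 / 2 * s ≤ ρ * s := by gcongr
  exact .of_dist_le (by linarith) (by linarith)

lemma ballsLinked_parent_of_faceAdjacent {s ρ : ℝ} (hs : 0 < s) (hcard : √(Fintype.card ι) ≤ ρ)
    (hρ : 3 / 2 ≤ ρ) {m m' : ι → ℤ} (h : FaceAdjacent m m') :
    BallsLinked (gridCenter (2 * s) (parent m)) (ρ * (2 * s) / 2)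
      (gridCenter s m') (ρ * s / 2) := by
  have hdouble : ρ * (2 * s) / 2 = 2 * (ρ * s / 2) := by ring
  rw [hdouble]
  exact (ballsLinked_of_faceAdjacent hs hρ h).of_closedBall_subset (by positivity)
    (closedBall_subset_closedBall_parent hs.le hcard m)

end Grid

section NearAndFar

variable {ι α : Type*}

/-- The grid cube with index `m` is near `x`: in the sup norm its centre is within `b / 2` sides of
`x`. The intervals are half-open so that exactly `b ^ card ι` cubes are near a given point. -/
def IsNear (b : ℕ) (s : ℝ) (x : EuclideanSpace ℝ ι) (m : ι → ℤ) : Prop :=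
  ∀ i, gridCenter s m i ∈ Ico (x i - b / 2 * s) (x i + b / 2 * s)

/-- The grid cube with index `m` is near none of the points `z a`. -/
def IsFar (b : ℕ) (s : ℝ) (z : α → EuclideanSpace ℝ ι) (m : ι → ℤ) : Prop :=
  ∀ a, ¬ IsNear b s (z a) m

lemma IsNear.parent {b : ℕ} (hb : 1 ≤ b) {s : ℝ} (hs : 0 ≤ s) {x : EuclideanSpace ℝ ι} {m : ι → ℤ}
    (h : IsNear b s x m) : IsNear b (2 * s) x (parent m) := by
  intro i
  obtain ⟨hlow, hhigh⟩ := h i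
  obtain ⟨hleft, hright⟩ := abs_le.1 (abs_gridCenter_sub_parent hs m i).le
  have hbs : 1 * s ≤ b * s := by gcongr; exact_mod_cast hb
  constructor <;> linarith

lemma IsFar.of_parent {b : ℕ} (hb : 1 ≤ b) {s : ℝ} (hs : 0 ≤ s) {z : α → EuclideanSpace ℝ ι}
    {m : ι → ℤ} (h : IsFar b (2 * s) z (parent m)) : IsFar b s z m :=
  fun a ha => h a (ha.parent hb hs)

variable [Fintype ι]

lemma IsFar.closedBall_subset {b : ℕ} {s γ ρ : ℝ} (hs : 0 < s) (hb : γ * ρ < b)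
    {z : α → EuclideanSpace ℝ ι} {m : ι → ℤ} (h : IsFar b s z m) :
    closedBall (gridCenter s m) (γ * (ρ * s / 2)) ⊆ {x | ∀ a, x ≠ z a} := by
  rintro _ hx a rfl
  refine h a fun i => ?_
  have hcoord : |z a i - gridCenter s m i| < b / 2 * s :=
    calc |z a i - gridCenter s m i| ≤ dist (z a) (gridCenter s m) :=
          (Real.dist_eq _ _).symm.trans_le (PiLp.dist_apply_le _ _ i)
      _ ≤ γ * ρ * (s / 2) := (mem_closedBall.1 hx).trans_eq (by ring)
      _ < b * (s / 2) := by gcongr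
      _ = b / 2 * s := by ring
  obtain ⟨hlow, hhigh⟩ := abs_lt.1 hcoord
  constructor <;> linarith

lemma isFar_of_mem_gridCell {b : ℕ} {s δ : ℝ} (hs : 0 ≤ s)
    (hδ : √(Fintype.card ι) * ((b + 1) / 2 * s) < δ) {z : α → EuclideanSpace ℝ ι} {m : ι → ℤ}
    {p : EuclideanSpace ℝ ι} (hpm : p ∈ gridCell s m) (hpz : ∀ a, p ∉ ball (z a) δ) :
    IsFar b s z m := by
  intro a hnear
  refine hpz a (mem_ball.2 ((dist_le_sqrt_card_mul (by positivity) fun i => ?_).trans_lt hδ))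
  have hcenter : |gridCenter s m i - z a i| ≤ b / 2 * s := by
    obtain ⟨hlow, hhigh⟩ := hnear i
    exact abs_le.2 ⟨by linarith, by linarith⟩
  linarith [hpm i, abs_sub_le (p i) (gridCenter s m i) (z a i)]

end NearAndFar

section Counting

/-- The first of the `b` consecutive indices of one-dimensional grid intervals near `x`. -/
def blockStart (b : ℕ) (s x : ℝ) : ℤ := ⌈(x + 1) / s - (b + 1) / 2⌉

/-- The indices of the one-dimensional grid intervals near `x`. -/
def nearBlock (b : ℕ) (s x : ℝ) : Finset ℤ :=
  Finset.Ico (blockStart b s x) (blockStart b s x + b)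

/-- The indices of the intervals of length `s` whose parents, of length `2 * s`, are near `x`. -/
def childBlock (b : ℕ) (s x : ℝ) : Finset ℤ :=
  Finset.Ico (2 * blockStart b (2 * s) x) (2 * blockStart b (2 * s) x + 2 * b)

/-- The indices outside `childBlock b s x` that are adjacent to `nearBlock b s x`. -/
def fringe (b : ℕ) (s x : ℝ) : Finset ℤ :=
  {blockStart b s x - 1, blockStart b s x + b} \ childBlock b s x

/-- An upper bound for the number of cubes of one level that a single point contributes to the
Whitney family: the children of near cubes that are not near, and the fringe, which is empty for
`b ≥ 3`. The subtraction does not truncate. -/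
def levelCount (n b : ℕ) : ℕ := (2 * b) ^ n - b ^ n + if b = 2 then n * b ^ (n - 1) else 0

variable {b : ℕ} {s : ℝ}

lemma mem_nearBlock_iff (hs : 0 < s) {x : ℝ} {t : ℤ} :
    t ∈ nearBlock b s x ↔ -1 + (t + 1 / 2) * s ∈ Ico (x - b / 2 * s) (x + b / 2 * s) := by
  have hlow : blockStart b s x ≤ t ↔ x - b / 2 * s ≤ -1 + (t + 1 / 2) * s := by
    rw [blockStart, Int.ceil_le, sub_le_iff_le_add, div_le_iff₀ hs]
    constructor <;> intro h <;> linarith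
  have hhigh : t < blockStart b s x + b ↔ -1 + (t + 1 / 2) * s < x + b / 2 * s := by
    rw [← sub_lt_iff_lt_add, blockStart, Int.lt_ceil, lt_sub_iff_add_lt, lt_div_iff₀ hs]
    push_cast
    constructor <;> intro h <;> linarith
  rw [nearBlock, Finset.mem_Ico, hlow, hhigh, mem_Ico]

lemma card_nearBlock (x : ℝ) : (nearBlock b s x).card = b := by simp [nearBlock]

lemma card_childBlock (x : ℝ) : (childBlock b s x).card = 2 * b := by
  rw [childBlock, Int.card_Ico]
  omega

lemma mem_childBlock_iff {x : ℝ} {t : ℤ} :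
    t ∈ childBlock b s x ↔ t / 2 ∈ nearBlock b (2 * s) x := by
  simp only [childBlock, nearBlock, Finset.mem_Ico]
  omega

-- The near block and the child block are centred within one interval of each other.
lemma abs_blockStart_sub_le (hs : s ≠ 0) (x : ℝ) :
    |2 * blockStart b s x - 4 * blockStart b (2 * s) x - b| ≤ 2 := by
  obtain ⟨u, hfine, hcoarse⟩ : ∃ u, (x + 1) / s = 2 * u ∧ (x + 1) / (2 * s) = u :=
    ⟨(x + 1) / (2 * s), by field_simp, rfl⟩
  simp only [blockStart, hfine, hcoarse]
  have hfine_le := Int.le_ceil (2 * u - ((b : ℝ) + 1) / 2)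
  have hfine_lt := Int.ceil_lt_add_one (2 * u - ((b : ℝ) + 1) / 2)
  have hcoarse_le := Int.le_ceil (u - ((b : ℝ) + 1) / 2)
  have hcoarse_lt := Int.ceil_lt_add_one (u - ((b : ℝ) + 1) / 2)
  rw [← Int.lt_add_one_iff, abs_lt, ← Int.cast_lt (R := ℝ), ← Int.cast_lt (R := ℝ)]
  push_cast
  constructor <;> linarith

lemma nearBlock_subset_childBlock (hb : 2 ≤ b) (hs : s ≠ 0) (x : ℝ) :
    nearBlock b s x ⊆ childBlock b s x := by
  have hstart := abs_le.1 (abs_blockStart_sub_le (b := b) hs x)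
  exact Finset.Ico_subset_Ico (by omega) (by omega)

lemma card_fringe_le (hb : 2 ≤ b) (hs : s ≠ 0) (x : ℝ) :
    (fringe b s x).card ≤ if b = 2 then 1 else 0 := by
  have hstart := abs_le.1 (abs_blockStart_sub_le (b := b) hs x)
  split_ifs with h2
  · refine Finset.card_le_one.2 fun t ht t' ht' => ?_
    simp only [fringe, childBlock, Finset.mem_sdiff, Finset.mem_insert, Finset.mem_singleton,
      Finset.mem_Ico] at ht ht'
    omega
  · rw [Nat.le_zero, Finset.card_eq_zero, Finset.eq_empty_iff_forall_notMem]
    intro t ht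
    simp only [fringe, childBlock, Finset.mem_sdiff, Finset.mem_insert, Finset.mem_singleton,
      Finset.mem_Ico] at ht
    omega

lemma mem_fringe_of_abs_sub_le_one (hb : 2 ≤ b) (hs : s ≠ 0) {x : ℝ} {t t' : ℤ}
    (ht' : t' ∈ nearBlock b s x) (htt' : |t - t'| ≤ 1) (ht : t ∉ childBlock b s x) :
    t ∈ fringe b s x := by
  have hnear : t ∉ nearBlock b s x := fun h => ht (nearBlock_subset_childBlock hb hs x h)
  simp only [fringe, nearBlock, Finset.mem_sdiff, Finset.mem_insert, Finset.mem_singleton,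
    Finset.mem_Ico] at hnear ht' ⊢
  rw [abs_le] at htt'
  exact ⟨by omega, ht⟩

variable {ι : Type*} [Fintype ι] [DecidableEq ι]

/-- A finite set containing the indices of all cubes that are not near `x` but have a near parent
or a near neighbour. -/
def layer (b : ℕ) (s : ℝ) (x : EuclideanSpace ℝ ι) : Finset (ι → ℤ) :=
  (Fintype.piFinset (fun i => childBlock b s (x i)) \
      Fintype.piFinset fun i => nearBlock b s (x i)) ∪
    Finset.univ.biUnion fun i =>
      Fintype.piFinset (Function.update (fun j => nearBlock b s (x j)) i (fringe b s (x i)))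

lemma isNear_iff_mem_piFinset (hs : 0 < s) {x : EuclideanSpace ℝ ι} {m : ι → ℤ} :
    IsNear b s x m ↔ m ∈ Fintype.piFinset fun i => nearBlock b s (x i) := by
  simp only [IsNear, gridCenter_apply, Fintype.mem_piFinset, mem_nearBlock_iff hs]

lemma card_piFinset_update_fringe_le (hb : 2 ≤ b) (hs : s ≠ 0) (x : EuclideanSpace ℝ ι) (i : ι) :
    (Fintype.piFinset
      (Function.update (fun j => nearBlock b s (x j)) i (fringe b s (x i)))).card ≤
      (if b = 2 then 1 else 0) * b ^ (Fintype.card ι - 1) := by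
  rw [Fintype.card_piFinset, ← Finset.mul_prod_erase _ _ (Finset.mem_univ i),
    Function.update_self]
  refine Nat.mul_le_mul (card_fringe_le hb hs (x i)) (le_of_eq ?_)
  calc ∏ j ∈ Finset.univ.erase i,
        (Function.update (fun j => nearBlock b s (x j)) i (fringe b s (x i)) j).card
      = ∏ _j ∈ Finset.univ.erase i, b := Finset.prod_congr rfl fun j hj => by
        rw [Function.update_of_ne (Finset.ne_of_mem_erase hj), card_nearBlock]
    _ = b ^ (Fintype.card ι - 1) := by simp

lemma card_layer_le (hb : 2 ≤ b) (hs : s ≠ 0) (x : EuclideanSpace ℝ ι) :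
    (layer b s x).card ≤ levelCount (Fintype.card ι) b := by
  refine (Finset.card_union_le _ _).trans (Nat.add_le_add (le_of_eq ?_) ?_)
  · rw [Finset.card_sdiff_of_subset
      (Fintype.piFinset_subset _ _ fun i => nearBlock_subset_childBlock hb hs (x i))]
    simp [Fintype.card_piFinset, card_nearBlock, card_childBlock]
  · refine (Finset.card_biUnion_le_card_mul _ _ _
      fun i _ => card_piFinset_update_fringe_le hb hs x i).trans (le_of_eq ?_)
    split_ifs <;> simp

lemma mem_layer (hb : 2 ≤ b) (hs : 0 < s) {x : EuclideanSpace ℝ ι} {m : ι → ℤ}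
    (hm : ¬ IsNear b s x m) (h : IsNear b (2 * s) x (parent m) ∨
      ∃ m', FaceAdjacent m m' ∧ IsNear b s x m') : m ∈ layer b s x := by
  have hm' := (isNear_iff_mem_piFinset hs).not.1 hm
  by_cases hchild : m ∈ Fintype.piFinset fun i => childBlock b s (x i)
  · exact Finset.mem_union_left _ (Finset.mem_sdiff.2 ⟨hchild, hm'⟩)
  have hparent : ¬ IsNear b (2 * s) x (parent m) := fun hnear =>
    hchild <| Fintype.mem_piFinset.2 fun i => mem_childBlock_iff.2 <|
      Fintype.mem_piFinset.1 ((isNear_iff_mem_piFinset (by positivity)).1 hnear) i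
  obtain ⟨m', ⟨i, heq, hi⟩, hnear⟩ := h.resolve_left hparent
  have hnear' := Fintype.mem_piFinset.1 ((isNear_iff_mem_piFinset hs).1 hnear)
  have hmj : ∀ j, j ≠ i → m j ∈ nearBlock b s (x j) := fun j hj => heq j hj ▸ hnear' j
  have hmi : m i ∉ childBlock b s (x i) := by
    refine fun hmi => hchild (Fintype.mem_piFinset.2 fun j => ?_)
    rcases eq_or_ne j i with rfl | hj
    · exact hmi
    · exact nearBlock_subset_childBlock hb hs.ne' _ (hmj j hj)
  refine Finset.mem_union_right _ (Finset.mem_biUnion.2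
    ⟨i, Finset.mem_univ i, Fintype.mem_piFinset.2 fun j => ?_⟩)
  rcases eq_or_ne j i with rfl | hj
  · rw [Function.update_self]
    exact mem_fringe_of_abs_sub_le_one hb hs.ne' (hnear' j) hi hmi
  · rw [Function.update_of_ne hj]
    exact hmj j hj

end Counting

section WhitneyFamily

/-- The side of the cubes of level `k`, obtained from the grid of `M ^ card ι` cubes in
`[-1, 1] ^ ι` by `k` dyadic subdivisions. -/
def side (M k : ℕ) : ℝ := 2 / (M * 2 ^ k : ℕ)

lemma side_pos {M : ℕ} (hM : 0 < M) (k : ℕ) : 0 < side M k := by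
  unfold side
  positivity

lemma two_mul_side_succ (M k : ℕ) : 2 * side M (k + 1) = side M k := by
  unfold side
  push_cast
  rw [pow_succ, ← mul_assoc, ← div_div, mul_div_cancel₀ _ two_ne_zero]

variable {ι α : Type*}

/-- The centre of the ball attached to the cube with index `q.2` of level `q.1`. -/
def ballCenter (M : ℕ) (q : Σ _ : ℕ, ι → ℤ) : EuclideanSpace ℝ ι := gridCenter (side M q.1) q.2

/-- The radius of the ball attached to a cube of level `q.1`; the ball contains the cube as soon as
`ρ ≥ √(card ι)`. -/
def ballRadius (ρ : ℝ) (M : ℕ) (q : Σ _ : ℕ, ι → ℤ) : ℝ := ρ * side M q.1 / 2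

lemma ballRadius_pos {ρ : ℝ} (hρ : 0 < ρ) {M : ℕ} (hM : 0 < M) (q : Σ _ : ℕ, ι → ℤ) :
    0 < ballRadius ρ M q := by
  have := side_pos hM q.1
  unfold ballRadius
  positivity

open Classical in
/-- The maximal far cube containing the cube with index `m` of level `k`, if the latter is far. -/
def maximalFar (b M : ℕ) (z : α → EuclideanSpace ℝ ι) : ℕ → (ι → ℤ) → Σ _ : ℕ, ι → ℤ
  | 0, m => ⟨0, m⟩
  | k + 1, m =>
    if IsFar b (side M k) z (parent m) then maximalFar b M z k (parent m) else ⟨k + 1, m⟩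

variable [Fintype ι]

lemma gridCell_subset_closedBall_maximalFar {b M : ℕ} {ρ : ℝ} (hM : 0 < M)
    (hcard : √(Fintype.card ι) ≤ ρ) (z : α → EuclideanSpace ℝ ι) (k : ℕ) (m : ι → ℤ) :
    gridCell (side M k) m ⊆
      closedBall (ballCenter M (maximalFar b M z k m)) (ballRadius ρ M (maximalFar b M z k m)) := by
  induction k generalizing m with
  | zero => exact gridCell_subset_closedBall (side_pos hM 0).le hcard m
  | succ k ih =>
    rw [maximalFar]
    split_ifs
    · refine (gridCell_subset_gridCell_parent (side_pos hM _).le m).trans ?_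
      rw [two_mul_side_succ]
      exact ih (parent m)
    · exact gridCell_subset_closedBall (side_pos hM _).le hcard m

variable [DecidableEq ι]

open Classical in
/-- The cubes of level `k` of the Whitney family: the far cubes of the first level, and later the
far cubes that have a parent or a neighbour which is not far. -/
def whitneyLevel (b M : ℕ) (z : α → EuclideanSpace ℝ ι) (k : ℕ) : Finset (ι → ℤ) :=
  {m ∈ gridBox ι (M * 2 ^ k) | IsFar b (side M k) z m ∧
    (k = 0 ∨ ¬ IsFar b (2 * side M k) z (parent m) ∨
      ∃ m', FaceAdjacent m m' ∧ ¬ IsFar b (side M k) z m')}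

/-- The Whitney family up to level `K`: besides the maximal far cubes it contains the far cubes
next to cubes which are not far, so that passing between neighbouring maximal cubes of different
levels takes steps of a single level. -/
def whitneyFamily (b M : ℕ) (z : α → EuclideanSpace ℝ ι) (K : ℕ) : Finset (Σ _ : ℕ, ι → ℤ) :=
  (Finset.range (K + 1)).sigma (whitneyLevel b M z)

variable {b M K k : ℕ} {z : α → EuclideanSpace ℝ ι} {m m' : ι → ℤ}

lemma mem_whitneyFamily :
    ⟨k, m⟩ ∈ whitneyFamily b M z K ↔
      k ≤ K ∧ m ∈ gridBox ι (M * 2 ^ k) ∧ IsFar b (side M k) z m ∧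
        (k = 0 ∨ ¬ IsFar b (2 * side M k) z (parent m) ∨
          ∃ m', FaceAdjacent m m' ∧ ¬ IsFar b (side M k) z m') := by
  simp only [whitneyFamily, whitneyLevel, Finset.mem_sigma, Finset.mem_range, Nat.lt_succ_iff,
    Finset.mem_filter]

lemma closedBall_mul_ballRadius_subset {γ ρ : ℝ} (hM : 0 < M) (hb : γ * ρ < b)
    {q : Σ _ : ℕ, ι → ℤ} (hq : q ∈ whitneyFamily b M z K) :
    closedBall (ballCenter M q) (γ * ballRadius ρ M q) ⊆ {x | ∀ a, x ≠ z a} :=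
  IsFar.closedBall_subset (side_pos hM q.1) hb (mem_whitneyFamily.1 hq).2.2.1

lemma card_whitneyLevel_zero_le : (whitneyLevel b M z 0).card ≤ M ^ Fintype.card ι := by
  classical
  refine (Finset.card_filter_le _ _).trans_eq ?_
  rw [card_gridBox, pow_zero, mul_one]

lemma card_whitneyLevel_succ_le [Fintype α] (hb : 2 ≤ b) (hM : 0 < M)
    (z : α → EuclideanSpace ℝ ι) (k : ℕ) :
    (whitneyLevel b M z (k + 1)).card ≤ Fintype.card α * levelCount (Fintype.card ι) b := by
  classical
  have hs := side_pos hM (k + 1)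
  have hsub : whitneyLevel b M z (k + 1) ⊆
      Finset.univ.biUnion fun a => layer b (side M (k + 1)) (z a) := by
    intro m hm
    obtain ⟨-, hfar, hzero | hnear⟩ := Finset.mem_filter.1 hm
    · exact absurd hzero k.succ_ne_zero
    simp only [IsFar, not_forall, not_not] at hnear
    obtain ⟨a, ha⟩ : ∃ a, IsNear b (2 * side M (k + 1)) (z a) (parent m) ∨
        ∃ m', FaceAdjacent m m' ∧ IsNear b (side M (k + 1)) (z a) m' := by
      rcases hnear with ⟨a, ha⟩ | ⟨m', hadj, a, ha⟩
      exacts [⟨a, .inl ha⟩, ⟨a, .inr ⟨m', hadj, ha⟩⟩]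
    exact Finset.mem_biUnion.2 ⟨a, Finset.mem_univ a, mem_layer hb hs (hfar a) ha⟩
  exact (Finset.card_le_card hsub).trans
    (Finset.card_biUnion_le_card_mul _ _ _ fun a _ => card_layer_le hb hs.ne' (z a))

lemma card_whitneyFamily_le [Fintype α] (hb : 2 ≤ b) (hM : 0 < M)
    (z : α → EuclideanSpace ℝ ι) (K : ℕ) :
    (whitneyFamily b M z K).card ≤
      M ^ Fintype.card ι + K * (Fintype.card α * levelCount (Fintype.card ι) b) := by
  rw [whitneyFamily, Finset.card_sigma, Finset.sum_range_succ', add_comm]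
  refine Nat.add_le_add card_whitneyLevel_zero_le ?_
  refine (Finset.sum_le_card_nsmul _ _ _ fun k _ => card_whitneyLevel_succ_le hb hM z k).trans ?_
  rw [Finset.card_range, smul_eq_mul]

lemma parent_mem_gridBox_level (hm : m ∈ gridBox ι (M * 2 ^ (k + 1))) :
    parent m ∈ gridBox ι (M * 2 ^ k) :=
  parent_mem_gridBox (by rwa [mul_left_comm, ← pow_succ'])

lemma maximalFar_mem_whitneyFamily (hkK : k ≤ K) (hm : m ∈ gridBox ι (M * 2 ^ k))
    (hfar : IsFar b (side M k) z m) : maximalFar b M z k m ∈ whitneyFamily b M z K := by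
  induction k generalizing m with
  | zero => exact mem_whitneyFamily.2 ⟨hkK, hm, hfar, .inl rfl⟩
  | succ k ih =>
    rw [maximalFar]
    split_ifs with hparent
    · exact ih (Nat.le_of_succ_le hkK) (parent_mem_gridBox_level hm) hparent
    · exact mem_whitneyFamily.2 ⟨hkK, hm, hfar, .inr (.inl (by rwa [two_mul_side_succ]))⟩

end WhitneyFamily

section Chains

variable {ι α : Type*} [Fintype ι] [DecidableEq ι]

/-- The graph of linked balls of the Whitney family. -/
def whitneyGraph (ρ : ℝ) (b M : ℕ) (z : α → EuclideanSpace ℝ ι) (K : ℕ) :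
    SimpleGraph (Σ _ : ℕ, ι → ℤ) :=
  linkGraph (ballCenter M) (ballRadius ρ M) (whitneyFamily b M z K)

variable {ρ : ℝ} {b M K k : ℕ} {z : α → EuclideanSpace ℝ ι} {m m' : ι → ℤ}

lemma whitneyGraph_reachable_of_faceAdjacent (hM : 0 < M) (hρ : 3 / 2 ≤ ρ)
    (hadj : FaceAdjacent m m') (hm : ⟨k, m⟩ ∈ whitneyFamily b M z K)
    (hm' : ⟨k, m'⟩ ∈ whitneyFamily b M z K) :
    (whitneyGraph ρ b M z K).Reachable ⟨k, m⟩ ⟨k, m'⟩ :=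
  BallsLinked.reachable_linkGraph (ballsLinked_of_faceAdjacent (side_pos hM k) hρ hadj) hm hm'

lemma whitneyGraph_reachable_parent_of_faceAdjacent (hM : 0 < M) (hcard : √(Fintype.card ι) ≤ ρ)
    (hρ : 3 / 2 ≤ ρ) (hadj : FaceAdjacent m m') (hm : ⟨k, parent m⟩ ∈ whitneyFamily b M z K)
    (hm' : ⟨k + 1, m'⟩ ∈ whitneyFamily b M z K) :
    (whitneyGraph ρ b M z K).Reachable ⟨k, parent m⟩ ⟨k + 1, m'⟩ := by
  have hlinked := ballsLinked_parent_of_faceAdjacent (side_pos hM (k + 1)) hcard hρ hadj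
  rw [two_mul_side_succ] at hlinked
  exact BallsLinked.reachable_linkGraph hlinked hm hm'

lemma mem_whitneyFamily_of_not_isFar_neighbor (hkK : k ≤ K) (hm : m ∈ gridBox ι (M * 2 ^ k))
    (hfar : IsFar b (side M k) z m) (hadj : FaceAdjacent m m')
    (hnear : ¬ IsFar b (side M k) z m') : ⟨k, m⟩ ∈ whitneyFamily b M z K :=
  mem_whitneyFamily.2 ⟨hkK, hm, hfar, .inr (.inr ⟨m', hadj, hnear⟩)⟩

lemma mem_whitneyFamily_of_not_isFar_parent (hkK : k + 1 ≤ K)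
    (hm : m ∈ gridBox ι (M * 2 ^ (k + 1))) (hfar : IsFar b (side M (k + 1)) z m)
    (hparent : ¬ IsFar b (side M k) z (parent m)) : ⟨k + 1, m⟩ ∈ whitneyFamily b M z K :=
  mem_whitneyFamily.2 ⟨hkK, hm, hfar, .inr (.inl (by rwa [two_mul_side_succ]))⟩

lemma parent_mem_whitneyFamily (hb : 1 ≤ b) (hM : 0 < M)
    (hm : ⟨k + 1, m⟩ ∈ whitneyFamily b M z K) (hparent : IsFar b (side M k) z (parent m)) :
    ⟨k, parent m⟩ ∈ whitneyFamily b M z K := by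
  obtain ⟨hkK, hbox, -, hzero | hnear | ⟨m', hadj, hnear⟩⟩ := mem_whitneyFamily.1 hm
  · exact absurd hzero k.succ_ne_zero
  · exact absurd hparent (by rwa [two_mul_side_succ] at hnear)
  · have hnear' : ¬ IsFar b (side M k) z (parent m') := by
      rw [← two_mul_side_succ]
      exact mt (IsFar.of_parent hb (side_pos hM _).le) hnear
    exact mem_whitneyFamily_of_not_isFar_neighbor (Nat.le_of_succ_le hkK)
      (parent_mem_gridBox_level hbox) hparent hadj.parent hnear'

variable [Nonempty ι]

lemma whitneyGraph_reachable_maximalFar_self (hb : 1 ≤ b) (hM : 0 < M)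
    (hcard : √(Fintype.card ι) ≤ ρ) (hρ : 3 / 2 ≤ ρ) (hm : ⟨k, m⟩ ∈ whitneyFamily b M z K) :
    (whitneyGraph ρ b M z K).Reachable (maximalFar b M z k m) ⟨k, m⟩ := by
  induction k generalizing m with
  | zero => rfl
  | succ k ih =>
    rw [maximalFar]
    split_ifs with hparent
    · have hmem := parent_mem_whitneyFamily hb hM hm hparent
      exact (ih hmem).trans (whitneyGraph_reachable_parent_of_faceAdjacent hM hcard hρ (.refl m)
        hmem hm)
    · rfl

-- Two neighbours of which only the first has a far parent: the parent of the first has a neighbour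
-- that is not far, hence belongs to the family although it need not be maximal.
lemma whitneyGraph_reachable_maximalFar_of_isFar_parent (hb : 1 ≤ b) (hM : 0 < M)
    (hcard : √(Fintype.card ι) ≤ ρ) (hρ : 3 / 2 ≤ ρ) (hkK : k + 1 ≤ K)
    (hm : m ∈ gridBox ι (M * 2 ^ (k + 1))) (hm' : m' ∈ gridBox ι (M * 2 ^ (k + 1)))
    (hfar' : IsFar b (side M (k + 1)) z m') (hadj : FaceAdjacent m m')
    (hparent : IsFar b (side M k) z (parent m)) (hparent' : ¬ IsFar b (side M k) z (parent m')) :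
    (whitneyGraph ρ b M z K).Reachable (maximalFar b M z k (parent m)) ⟨k + 1, m'⟩ := by
  have hmem : ⟨k, parent m⟩ ∈ whitneyFamily b M z K :=
    mem_whitneyFamily_of_not_isFar_neighbor (Nat.le_of_succ_le hkK) (parent_mem_gridBox_level hm)
      hparent hadj.parent hparent'
  exact (whitneyGraph_reachable_maximalFar_self hb hM hcard hρ hmem).trans
    (whitneyGraph_reachable_parent_of_faceAdjacent hM hcard hρ hadj hmem
      (mem_whitneyFamily_of_not_isFar_parent hkK hm' hfar' hparent'))

lemma whitneyGraph_reachable_maximalFar_of_faceAdjacent (hb : 1 ≤ b) (hM : 0 < M)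
    (hcard : √(Fintype.card ι) ≤ ρ) (hρ : 3 / 2 ≤ ρ) (hkK : k ≤ K)
    (hm : m ∈ gridBox ι (M * 2 ^ k)) (hm' : m' ∈ gridBox ι (M * 2 ^ k))
    (hfar : IsFar b (side M k) z m) (hfar' : IsFar b (side M k) z m')
    (hadj : FaceAdjacent m m') :
    (whitneyGraph ρ b M z K).Reachable (maximalFar b M z k m) (maximalFar b M z k m') := by
  induction k generalizing m m' with
  | zero =>
    rw [maximalFar, maximalFar]
    exact whitneyGraph_reachable_of_faceAdjacent hM hρ hadj
      (maximalFar_mem_whitneyFamily hkK hm hfar) (maximalFar_mem_whitneyFamily hkK hm' hfar')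
  | succ k ih =>
    rw [maximalFar, maximalFar]
    split_ifs with hparent hparent' hparent'
    · exact ih (Nat.le_of_succ_le hkK) (parent_mem_gridBox_level hm) (parent_mem_gridBox_level hm')
        hparent hparent' hadj.parent
    · exact whitneyGraph_reachable_maximalFar_of_isFar_parent hb hM hcard hρ hkK hm hm' hfar' hadj
        hparent hparent'
    · exact (whitneyGraph_reachable_maximalFar_of_isFar_parent hb hM hcard hρ hkK hm' hm hfar
        hadj.symm hparent' hparent).symm
    · exact whitneyGraph_reachable_of_faceAdjacent hM hρ hadj
        (mem_whitneyFamily_of_not_isFar_parent hkK hm hfar hparent)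
        (mem_whitneyFamily_of_not_isFar_parent hkK hm' hfar' hparent')

-- Change one coordinate of the index at a time: every intermediate cube contains `p`.
lemma whitneyGraph_reachable_maximalFar_of_mem_gridCell (hb : 1 ≤ b) (hM : 0 < M)
    (hcard : √(Fintype.card ι) ≤ ρ) (hρ : 3 / 2 ≤ ρ)
    (hm : m ∈ gridBox ι (M * 2 ^ K)) (hm' : m' ∈ gridBox ι (M * 2 ^ K))
    {p : EuclideanSpace ℝ ι} (hpm : p ∈ gridCell (side M K) m) (hpm' : p ∈ gridCell (side M K) m')
    (hfar : ∀ m'', p ∈ gridCell (side M K) m'' → IsFar b (side M K) z m'') :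
    (whitneyGraph ρ b M z K).Reachable (maximalFar b M z K m) (maximalFar b M z K m') := by
  have hbox (t : Finset ι) : t.piecewise m' m ∈ gridBox ι (M * 2 ^ K) :=
    Fintype.mem_piFinset.2 fun i => t.piecewise_cases m' m (· ∈ Finset.Ico 0 _)
      (Fintype.mem_piFinset.1 hm' i) (Fintype.mem_piFinset.1 hm i)
  have hcell (t : Finset ι) : p ∈ gridCell (side M K) (t.piecewise m' m) := by
    intro i
    rw [gridCenter_apply]
    exact t.piecewise_cases m' m (fun c : ℤ => |p i - (-1 + (c + 1 / 2) * side M K)| ≤ _)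
      (hpm' i) (hpm i)
  have hadj (t : Finset ι) (i : ι) :
      FaceAdjacent (t.piecewise m' m) ((insert i t).piecewise m' m) :=
    ⟨i, fun j hj => (t.piecewise_insert_of_ne m' m hj).symm,
      abs_sub_le_one_of_mem_gridCell (side_pos hM K) (hcell t) (hcell _) i⟩
  suffices hreach : ∀ t : Finset ι, (whitneyGraph ρ b M z K).Reachable (maximalFar b M z K m)
      (maximalFar b M z K (t.piecewise m' m)) by
    simpa only [Finset.piecewise_univ] using hreach Finset.univ
  intro t
  induction t using Finset.induction_on with
  | empty => rw [Finset.piecewise_empty]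
  | insert i t _ ih =>
    exact ih.trans (whitneyGraph_reachable_maximalFar_of_faceAdjacent hb hM hcard hρ le_rfl
      (hbox t) (hbox _) (hfar _ (hcell t)) (hfar _ (hcell _)) (hadj t i))

lemma whitneyGraph_reachable_of_isPreconnected (hb : 1 ≤ b) (hM : 0 < M)
    (hcard : √(Fintype.card ι) ≤ ρ) (hρ : 3 / 2 ≤ ρ) {S : Set (EuclideanSpace ℝ ι)}
    (hS : IsPreconnected S) (hcube : ∀ p ∈ S, ∀ i, |p i| ≤ 1)
    (hfar : ∀ p ∈ S, ∀ m, p ∈ gridCell (side M K) m → IsFar b (side M K) z m)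
    (hm : m ∈ gridBox ι (M * 2 ^ K)) (hm' : m' ∈ gridBox ι (M * 2 ^ K))
    (hSm : (S ∩ gridCell (side M K) m).Nonempty) (hSm' : (S ∩ gridCell (side M K) m').Nonempty) :
    (whitneyGraph ρ b M z K).Reachable (maximalFar b M z K m) (maximalFar b M z K m') := by
  refine SimpleGraph.ConnectedComponent.eq.1 <| eq_of_isPreconnected_of_finite_closed_cover hS
    (gridBox ι (M * 2 ^ K)).finite_toSet (fun q _ => isClosed_gridCell (side M K) q)
    (label := fun q => (whitneyGraph ρ b M z K).connectedComponentMk (maximalFar b M z K q))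
    (fun p hp => ?_) (fun q hq q' hq' hqq' => ?_) hm hm' hSm hSm'
  · obtain ⟨q, hq, hpq⟩ := exists_mem_gridBox_mem_gridCell (N := M * 2 ^ K) (by positivity)
      (hcube p hp)
    exact mem_biUnion hq hpq
  · obtain ⟨p, hpS, hpq, hpq'⟩ := hqq'
    exact SimpleGraph.ConnectedComponent.eq.2 <|
      whitneyGraph_reachable_maximalFar_of_mem_gridCell hb hM hcard hρ hq hq' hpq hpq' (hfar p hpS)

lemma exists_whitneyGraph_reachable_of_isPreconnected (hb : 1 ≤ b) (hM : 0 < M)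
    (hcard : √(Fintype.card ι) ≤ ρ) (hρ : 3 / 2 ≤ ρ) {δ : ℝ}
    (hδ : √(Fintype.card ι) * ((b + 1) / 2 * side M K) < δ) {S : Set (EuclideanSpace ℝ ι)}
    (hS : IsPreconnected S) (hcube : ∀ p ∈ S, ∀ i, |p i| ≤ 1)
    (havoid : ∀ p ∈ S, ∀ a, p ∉ ball (z a) δ)
    {v w : EuclideanSpace ℝ ι} (hv : v ∈ S) (hw : w ∈ S) :
    ∃ p ∈ whitneyFamily b M z K, ∃ q, v ∈ closedBall (ballCenter M p) (ballRadius ρ M p) ∧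
      w ∈ closedBall (ballCenter M q) (ballRadius ρ M q) ∧
      (whitneyGraph ρ b M z K).Reachable p q := by
  have hfar : ∀ p ∈ S, ∀ m, p ∈ gridCell (side M K) m → IsFar b (side M K) z m :=
    fun p hp m hpm => isFar_of_mem_gridCell (side_pos hM K).le hδ hpm (havoid p hp)
  have hMK : 0 < M * 2 ^ K := by positivity
  obtain ⟨m, hm, hvm⟩ := exists_mem_gridBox_mem_gridCell hMK (hcube v hv)
  obtain ⟨m', hm', hwm'⟩ := exists_mem_gridBox_mem_gridCell hMK (hcube w hw)
  exact ⟨_, maximalFar_mem_whitneyFamily le_rfl hm (hfar v hv m hvm), _,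
    gridCell_subset_closedBall_maximalFar hM hcard z K m hvm,
    gridCell_subset_closedBall_maximalFar hM hcard z K m' hwm',
    whitneyGraph_reachable_of_isPreconnected hb hM hcard hρ hS hcube hfar hm hm'
      ⟨v, hv, hvm⟩ ⟨w, hw, hwm'⟩⟩

end Chains

section Parameters

/-- The ratio of the radius of a ball of the covering to half the side of its cube: `√n` is needed
for the ball to contain the cube, and `3 / 2` for neighbouring balls to overlap enough. -/
def ballScale (n : ℕ) : ℝ := max √n (3 / 2)

lemma ballScale_pos (n : ℕ) : 0 < ballScale n := by
  unfold ballScale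
  positivity

lemma ballScale_of_le_two {n : ℕ} (hn : n ≤ 2) : ballScale n = 3 / 2 := by
  have hn' : (n : ℝ) ≤ 2 := by exact_mod_cast hn
  exact max_eq_right (Real.sqrt_le_iff.2 ⟨by norm_num, by linarith⟩)

lemma five_thirds_le_sqrt {n : ℕ} (hn : 3 ≤ n) : 5 / 3 ≤ √(n : ℝ) := by
  have hn' : (3 : ℝ) ≤ n := by exact_mod_cast hn
  exact Real.le_sqrt_of_sq_le (by linarith)

lemma ballScale_of_three_le {n : ℕ} (hn : 3 ≤ n) : ballScale n = √n :=
  max_eq_left (by linarith [five_thirds_le_sqrt hn])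

lemma seven_fifths_le_sqrt {n : ℕ} (hn : 2 ≤ n) : 7 / 5 ≤ √(n : ℝ) := by
  have hn' : (2 : ℝ) ≤ n := by exact_mod_cast hn
  exact Real.le_sqrt_of_sq_le (by linarith)

lemma add_one_le_three_mul_sqrt_mul {n b : ℕ} {γ : ℝ} (hn : 1 ≤ n) (hγ : 1 < γ)
    (h : b - 1 ≤ γ * ballScale n) : b + 1 ≤ 3 * √n * γ := by
  obtain rfl | hn2 | hn3 : n = 1 ∨ n = 2 ∨ 3 ≤ n := by omega
  · rw [ballScale_of_le_two (by norm_num)] at h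
    rw [Nat.cast_one, Real.sqrt_one]
    rcases le_or_gt b 2 with hb | hb
    · have : (b : ℝ) ≤ 2 := by exact_mod_cast hb
      linarith
    · have : (3 : ℝ) ≤ b := by exact_mod_cast hb
      linarith
  · rw [ballScale_of_le_two hn2.le] at h
    have hsqrt : 7 / 5 * γ ≤ √n * γ := by gcongr; exact seven_fifths_le_sqrt hn2.ge
    linarith
  · rw [ballScale_of_three_le hn3] at h
    have hsqrt : 5 / 3 * γ ≤ √n * γ := by gcongr; exact five_thirds_le_sqrt hn3
    linarith

lemma levelCount_two_le {n : ℕ} {γ : ℝ} (hn : 1 ≤ n) (hγ : 1 < γ) (h : γ * ballScale n < 2) :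
    levelCount n 2 ≤ (3 * √n * γ) ^ n := by
  have hn4 : n < 4 := by
    have hsqrt : √(n : ℝ) < 2 :=
      calc √(n : ℝ) ≤ ballScale n := le_max_left _ _
        _ ≤ γ * ballScale n := le_mul_of_one_le_left (ballScale_pos n).le hγ.le
        _ < 2 := h
    rw [Real.sqrt_lt' two_pos] at hsqrt
    norm_num at hsqrt
    exact_mod_cast hsqrt
  have hpow {x : ℝ} (hx0 : 0 ≤ x) (hx : x ≤ √n) : (3 * x) ^ n ≤ (3 * √n * γ) ^ n := by
    gcongr ?_ ^ n
    exact (mul_le_mul_of_nonneg_left hx zero_le_three).trans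
      (le_mul_of_one_le_right (by positivity) hγ.le)
  interval_cases n
  · refine le_trans ?_ (hpow zero_le_one (Real.one_le_sqrt.2 (by norm_num)))
    norm_num [levelCount]
  · refine le_trans ?_ (hpow (by norm_num) (seven_fifths_le_sqrt le_rfl))
    norm_num [levelCount]
  · refine le_trans ?_ (hpow (by norm_num) (five_thirds_le_sqrt le_rfl))
    norm_num [levelCount]

lemma levelCount_le_of_three_le {n b : ℕ} {γ : ℝ} (hn : 1 ≤ n) (hb : 3 ≤ b)
    (h : b - 1 ≤ γ * ballScale n) : levelCount n b ≤ (3 * √n * γ) ^ n := by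
  have hb' : (3 : ℝ) ≤ b := by exact_mod_cast hb
  have hb2 : b ≠ 2 := by omega
  obtain rfl | rfl | hn3 : n = 1 ∨ n = 2 ∨ 3 ≤ n := by omega
  · rw [ballScale_of_le_two (by norm_num)] at h
    have hcount : levelCount 1 b = b := by
      simp only [levelCount, hb2, if_false, pow_one]
      omega
    rw [hcount, Nat.cast_one, Real.sqrt_one, pow_one]
    linarith
  · rw [ballScale_of_le_two le_rfl] at h
    have hcount : levelCount 2 b = 3 * b ^ 2 := by
      simp only [levelCount, hb2, if_false, mul_pow]
      omega
    calc (levelCount 2 b : ℝ) = 3 * (b : ℝ) ^ 2 := by rw [hcount]; push_cast; ring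
      _ ≤ 3 * (9 / 4 * γ) ^ 2 := by gcongr; linarith
      _ ≤ 9 * 2 * γ ^ 2 := by linarith [sq_nonneg γ]
      _ = (3 * √(2 : ℕ) * γ) ^ 2 := by
        rw [mul_pow, mul_pow, Real.sq_sqrt (Nat.cast_nonneg 2)]
        norm_num
  · rw [ballScale_of_three_le hn3] at h
    have hcount : levelCount n b ≤ (2 * b) ^ n := by simp [levelCount, hb2]
    calc (levelCount n b : ℝ) ≤ (2 * b) ^ n := by exact_mod_cast hcount
      _ ≤ (3 * √n * γ) ^ n := by gcongr ?_ ^ n; linarith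

lemma exists_nearness_parameter {n : ℕ} {γ : ℝ} (hn : 1 ≤ n) (hγ : 1 < γ) :
    ∃ b : ℕ, 2 ≤ b ∧ γ * ballScale n < b ∧ b + 1 ≤ 3 * √n * γ ∧
      levelCount n b ≤ (3 * √n * γ) ^ n := by
  have hscale : 1 * (3 / 2) ≤ γ * ballScale n := by gcongr; exact le_max_right _ _
  have hlt := Nat.lt_floor_add_one (γ * ballScale n)
  have hle : ((⌊γ * ballScale n⌋₊ + 1 : ℕ) : ℝ) - 1 ≤ γ * ballScale n := by
    push_cast
    linarith [Nat.floor_le (show 0 ≤ γ * ballScale n by linarith)]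
  have htwo : 2 ≤ ⌊γ * ballScale n⌋₊ + 1 := by
    have := (Nat.one_le_floor_iff (γ * ballScale n)).2 (by linarith)
    omega
  refine ⟨⌊γ * ballScale n⌋₊ + 1, htwo, by exact_mod_cast hlt,
    add_one_le_three_mul_sqrt_mul hn hγ hle, ?_⟩
  rcases htwo.eq_or_lt with h2 | h3
  · rw [← h2]
    exact levelCount_two_le hn hγ (hlt.trans_le (by exact_mod_cast h2.ge))
  · exact levelCount_le_of_three_le hn h3 hle

lemma one_third_le_logb_three_halves : 1 / 3 ≤ Real.logb 2 (3 / 2) := by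
  have hcube : 1 ≤ Real.logb 2 ((3 / 2) ^ 3) := by
    rw [Real.le_logb_iff_rpow_le (by norm_num) (by norm_num)]
    norm_num
  rw [Real.logb_pow] at hcube
  push_cast at hcube
  linarith

-- For `2 ^ (K + 1) ≤ y < 2 ^ (K + 2)` the choice `M = 4` suffices if `4 ≤ x`. Otherwise `n = 1`,
-- and either `M = 3` suffices or `y ≥ 3 * 2 ^ K` yields an extra `1 / 3` in the logarithm.
lemma exists_grid_parameters {n : ℕ} {x y : ℝ} (hx : 3 ≤ x) (hy : 3 ≤ y)
    (hxn : n = 1 ∨ 4 ≤ x) :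
    ∃ M K : ℕ, 0 < M ∧ y < M * 2 ^ K ∧ M ^ n + K * x ^ n ≤ x ^ n * Real.logb 2 y := by
  obtain ⟨L, hL, hL'⟩ := exists_nat_pow_near (show 1 ≤ y by linarith) (one_lt_two (α := ℝ))
  obtain ⟨K, rfl⟩ : ∃ K, L = K + 1 := by
    refine Nat.exists_eq_succ_of_ne_zero ?_
    rintro rfl
    norm_num at hL'
    linarith
  have hy4 : y < (4 : ℕ) * 2 ^ K := hL'.trans_eq (by push_cast; ring)
  have hlog : K + 1 ≤ Real.logb 2 y := by
    rw [Real.le_logb_iff_rpow_le one_lt_two (by linarith)]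
    exact_mod_cast hL
  have enough {M : ℕ} {t : ℝ} (hM : M ^ n ≤ x ^ n * t) (ht : K + t ≤ Real.logb 2 y) :
      M ^ n + K * x ^ n ≤ x ^ n * Real.logb 2 y :=
    calc M ^ n + K * x ^ n ≤ x ^ n * (K + t) := by linarith
      _ ≤ x ^ n * Real.logb 2 y := by gcongr
  rcases hxn with rfl | hx4
  · rcases lt_or_ge y (3 * 2 ^ K) with hy3 | hy3
    · exact ⟨3, K, by norm_num, hy3, enough (t := 1) (by simpa using hx) hlog⟩
    · refine ⟨4, K, by norm_num, hy4, enough (t := 4 / 3) (by norm_num; linarith) ?_⟩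
      calc (K : ℝ) + 4 / 3 = 1 / 3 + (K + 1 : ℕ) := by push_cast; ring
        _ ≤ Real.logb 2 (3 / 2) + (K + 1 : ℕ) := by gcongr; exact one_third_le_logb_three_halves
        _ = Real.logb 2 (3 / 2 * 2 ^ (K + 1)) := by
          rw [Real.logb_mul (by norm_num) (by positivity), Real.logb_pow,
            Real.logb_self_eq_one one_lt_two, mul_one]
        _ ≤ Real.logb 2 y := Real.logb_le_logb_of_le one_lt_two (by positivity)
          (by rw [pow_succ]; linarith)
  · refine ⟨4, K, by norm_num, hy4, enough (t := 1) ?_ hlog⟩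
    rw [mul_one]
    exact_mod_cast pow_le_pow_left₀ (by norm_num) hx4 n

lemma exists_whitney_parameters {n d : ℕ} (hn : 1 ≤ n) (hd : 1 ≤ d) {γ : ℝ} (hγ : 1 < γ)
    {δ : ℝ} (hδ0 : 0 < δ) (hδ1 : δ < 1) :
    ∃ b M K : ℕ, 2 ≤ b ∧ 0 < M ∧ γ * ballScale n < b ∧ √n * ((b + 1) / 2 * side M K) < δ ∧
      ((M ^ n + K * (d * levelCount n b) : ℕ) : ℝ) ≤
        d * (3 * √n * γ) ^ n * Real.logb 2 (3 * n * γ / δ) := by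
  have hn' : (1 : ℝ) ≤ n := by exact_mod_cast hn
  have hd' : (1 : ℝ) ≤ d := by exact_mod_cast hd
  have hx : 3 * 1 * 1 ≤ 3 * √n * γ := by gcongr; exact Real.one_le_sqrt.2 hn'
  have hy : 3 * 1 * 1 / 1 ≤ 3 * n * γ / δ := by gcongr
  have hxn : n = 1 ∨ 4 ≤ 3 * √n * γ := by
    refine hn.eq_or_lt'.imp_right fun hn2 => ?_
    calc (4 : ℝ) ≤ 3 * (7 / 5) * 1 := by norm_num
      _ ≤ 3 * √n * γ := by gcongr; exact seven_fifths_le_sqrt hn2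
  obtain ⟨b, hb, hscale, hb_le, hcount⟩ := exists_nearness_parameter hn hγ
  obtain ⟨M, K, hM, hyMK, hsum⟩ := exists_grid_parameters (by linarith)
    (show 3 ≤ 3 * n * γ / δ by linarith) hxn
  refine ⟨b, M, K, hb, hM, hscale, ?_, ?_⟩
  · calc √n * ((b + 1) / 2 * side M K) ≤ √n * (3 * √n * γ / 2 * side M K) := by
          have := side_pos hM K
          gcongr
      _ = 3 * n * γ / (M * 2 ^ K) := by
          rw [side]
          push_cast
          linear_combination (3 * γ / (M * 2 ^ K)) * Real.mul_self_sqrt (Nat.cast_nonneg (α := ℝ) n)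
      _ < δ := by
          rw [div_lt_iff₀ (by positivity), mul_comm δ]
          exact (div_lt_iff₀ hδ0).1 hyMK
  · push_cast
    calc (M : ℝ) ^ n + K * (d * levelCount n b)
        ≤ d * M ^ n + K * (d * (3 * √n * γ) ^ n) := by
          gcongr
          exact le_mul_of_one_le_left (by positivity) hd'
      _ = d * (M ^ n + K * (3 * √n * γ) ^ n) := by ring
      _ ≤ d * ((3 * √n * γ) ^ n * Real.logb 2 (3 * n * γ / δ)) := by gcongr
      _ = d * (3 * √n * γ) ^ n * Real.logb 2 (3 * n * γ / δ) := by ring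

end Parameters

end WhitneyCovering

open WhitneyCovering

/-- Whitney-type covering theorem: for `n, d ≥ 1`, `γ > 1`, points `z₁, …, z_d ∈ ℝⁿ` and
`0 < δ < 1`, there is a `γ`-doubling ball covering of `Q_δ = Q \ U_δ` (the unit cube minus
the open `δ`-neighborhood of the points) in `ℝⁿ \ {z₁, …, z_d}` with at most
`d (3√n γ)ⁿ log₂(3nγ/δ)` balls; moreover any two points in the same connected component of
`Q_δ` are joined by a chain of pairwise distinct balls of the covering in which consecutive
balls intersect, the ratio of consecutive radii is `1/2`, `1`, or `2`, and each consecutive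
intersection contains a ball of radius at least `1/3` of the smaller radius. -/
theorem whitney_doubling_covering (n d : ℕ) (hn : 1 ≤ n) (hd : 1 ≤ d)
    (γ : ℝ) (hγ : 1 < γ) (z : Fin d → EuclideanSpace ℝ (Fin n))
    (δ : ℝ) (hδ0 : 0 < δ) (hδ1 : δ < 1) :
    ∃ (κ : ℕ) (c : Fin κ → EuclideanSpace ℝ (Fin n)) (r : Fin κ → ℝ),
      (∀ j, 0 < r j) ∧
      -- each ball, and its `γ` times larger concentric ball, avoid the points `z i`
      (∀ j, closedBall (c j) (γ * r j) ⊆ {x | ∀ i, x ≠ z i}) ∧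
      -- the balls cover `Q_δ`
      (unitCube n \ (⋃ i, ball (z i) δ) ⊆ ⋃ j, closedBall (c j) (r j)) ∧
      -- cardinality bound
      ((κ : ℝ) ≤ (d : ℝ) * (3 * Real.sqrt n * γ) ^ n * Real.logb 2 (3 * n * γ / δ)) ∧
      -- chain property
      (∀ v w : EuclideanSpace ℝ (Fin n), v ∈ unitCube n \ (⋃ i, ball (z i) δ) →
        w ∈ connectedComponentIn (unitCube n \ (⋃ i, ball (z i) δ)) v →
        ∃ (l : ℕ) (hl : 0 < l) (js : Fin l → Fin κ), Function.Injective js ∧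
          v ∈ closedBall (c (js ⟨0, hl⟩)) (r (js ⟨0, hl⟩)) ∧
          w ∈ closedBall (c (js ⟨l - 1, by omega⟩)) (r (js ⟨l - 1, by omega⟩)) ∧
          ∀ m : ℕ, (h : m + 1 < l) →
            (closedBall (c (js ⟨m, by omega⟩)) (r (js ⟨m, by omega⟩)) ∩
              closedBall (c (js ⟨m + 1, h⟩)) (r (js ⟨m + 1, h⟩))).Nonempty ∧
            (r (js ⟨m, by omega⟩) / r (js ⟨m + 1, h⟩) = 1 / 2 ∨
             r (js ⟨m, by omega⟩) / r (js ⟨m + 1, h⟩) = 1 ∨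
             r (js ⟨m, by omega⟩) / r (js ⟨m + 1, h⟩) = 2) ∧
            ∃ c' : EuclideanSpace ℝ (Fin n),
              closedBall c' (min (r (js ⟨m, by omega⟩)) (r (js ⟨m + 1, h⟩)) / 3) ⊆
                closedBall (c (js ⟨m, by omega⟩)) (r (js ⟨m, by omega⟩)) ∩
                closedBall (c (js ⟨m + 1, h⟩)) (r (js ⟨m + 1, h⟩))) := by
  have : Nonempty (Fin n) := ⟨⟨0, hn⟩⟩
  obtain ⟨b, M, K, hb, hM, hscale, hside, hcount⟩ := exists_whitney_parameters hn hd hγ hδ0 hδ1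
  have hpos (q : Σ _ : ℕ, Fin n → ℤ) : 0 < ballRadius (ballScale n) M q :=
    ballRadius_pos (ballScale_pos n) hM q
  have hreach {S} (hSQ : S ⊆ unitCube n \ ⋃ i, ball (z i) δ) (hS : IsPreconnected S) {v w}
      (hv : v ∈ S) (hw : w ∈ S) :=
    exists_whitneyGraph_reachable_of_isPreconnected (ρ := ballScale n) (one_le_two.trans hb) hM
      (by simp [ballScale]) (le_max_right _ _) (by rwa [Fintype.card_fin]) hS
      (fun p hp => (hSQ hp).1) (fun p hp i hi => (hSQ hp).2 (mem_iUnion_of_mem i hi)) hv hw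
  let F := whitneyFamily b M z K
  refine ⟨F.card, fun j => ballCenter M (F.equivFin.symm j).1,
    fun j => ballRadius (ballScale n) M (F.equivFin.symm j).1, fun j => hpos _,
    fun j => closedBall_mul_ballRadius_subset hM hscale (F.equivFin.symm j).2, fun p hp => ?_,
    (Nat.cast_le.2 (by simpa using card_whitneyFamily_le hb hM z K)).trans hcount,
    fun v w hv hw => ?_⟩
  · obtain ⟨q, hq, -, hpq, -⟩ :=
      hreach (singleton_subset_iff.2 hp) isPreconnected_singleton rfl rfl
    exact mem_iUnion.2 ⟨F.equivFin ⟨q, hq⟩, by simpa using hpq⟩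
  · obtain ⟨p, hp, q, hvp, hwq, hpq⟩ := hreach (connectedComponentIn_subset _ v)
      isPreconnected_connectedComponentIn (mem_connectedComponentIn hv) hw
    obtain ⟨l, js, hinj, rfl, rfl, hlinked⟩ := exists_injective_ballsLinked_chain hp hpq
    exact ⟨l + 1, l.succ_pos, js, hinj, hvp, hwq,
      fun i hi => ⟨(hlinked i hi).inter_nonempty (hpos _) (hpos _), hlinked i hi⟩⟩
end
end

section
/- For every positive integer p there exists a constant A'_p > 0, depending only on p, with the following property. Let 0 < β < α < 1, let D be an open disk in ℂ, and let f be analytic and p-valent in D. Then sup_{αD} |f| ≤ c_p(α, β) · sup_{βD} |f|, where αD and βD denote the concentric disks of radii scaled, respectively, by α and β, and c_p(α, β) = ( (p+1)·α^p + A'_p/(1−α)^{2p+1} ) / β^p. -/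
open Metric Set

noncomputable section

/-- `f` is `p`-valent in `W`: for every `c ∈ ℂ` the equation `f z = c` has at most `p`
solutions in `W`. -/
def PValentOn (f : ℂ → ℂ) (W : Set ℂ) (p : ℕ) : Prop :=
  ∀ c : ℂ, ∀ s : Finset ℂ, (∀ t ∈ s, t ∈ W ∧ f t = c) → s.card ≤ p

/-!
Transport `f` from the unit disc to the strip `|im w| < π / 2` by `w ↦ tanh (w / 2)`. Since `f` is
`p`-valent, the Dirichlet energy of `½ log (1 + |f|²)` over a rectangle is at most `2πp` times the
maximum of this function there, so Cauchy-Schwarz provides horizontal and vertical lines along which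
it varies little. If `|f| ≤ 1` on the disc of radius `1/4` and `|f| = O((1 - |z|)^(-K))`, this
length-area argument improves the exponent `K` to `√(K (2p + 1))`; iterating it drives the
exponent to `2p + 1`, with a constant depending only on `p`.

To pass from the disc of radius `β` to the disc of radius `1/4`, suppose `|f| ≤ m` on the former
and let `M`, much larger than `m`, be the maximum on the latter. Subtract a regular value `c` of `f`
with `2m < |c| < 3m`. The at most `p` zeros of `f - c` are simple and lie outside the disc of
radius `β`, so dividing them out costs a factor `β^(-p)` at the origin. By the growth estimate the
quotient is bounded by a multiple of `M`, and the Harnack inequality for it yields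
`M³ ≤ C M² m / β^p`.
-/

open MeasureTheory Complex Real

namespace PValentOn

variable {f g : ℂ → ℂ} {V W : Set ℂ} {p : ℕ}

lemma comp (hf : PValentOn f W p) (hg : InjOn g V) (hVW : MapsTo g V W) :
    PValentOn (f ∘ g) V p := fun c s hs => by
  classical
  have hgs : InjOn g s := hg.mono fun t ht => (hs t ht).1
  rw [← Finset.card_image_of_injOn hgs]
  refine hf c _ fun t ht => ?_
  obtain ⟨u, hu, rfl⟩ := Finset.mem_image.mp ht
  exact ⟨hVW (hs u hu).1, (hs u hu).2⟩

lemma mono (hf : PValentOn f W p) (hVW : V ⊆ W) : PValentOn f V p :=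
  hf.comp (injOn_id V) hVW

lemma div_const (hf : PValentOn f W p) {a : ℂ} (ha : a ≠ 0) :
    PValentOn (fun z => f z / a) W p := fun c s hs =>
  hf (c * a) s fun t ht => ⟨(hs t ht).1, (div_eq_iff ha).mp (hs t ht).2⟩

lemma exists_finset_fiber (hf : PValentOn f W p) (c : ℂ) :
    ∃ s : Finset ℂ, s.card ≤ p ∧ ∀ z, z ∈ s ↔ z ∈ W ∧ f z = c := by
  have hfin : {z | z ∈ W ∧ f z = c}.Finite := by
    by_contra hinf
    obtain ⟨s, hs, hcard⟩ := Set.Infinite.exists_subset_card_eq hinf (p + 1)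
    exact absurd (hf c s fun t ht => hs ht) (by omega)
  exact ⟨hfin.toFinset, hf c _ fun t ht => hfin.mem_toFinset.mp ht, fun z => hfin.mem_toFinset⟩

lemma tsum_indicator_image_le (hf : PValentOn f W p) {E : ℕ → Set ℂ} (hE : ∀ n, E n ⊆ W)
    (hdisj : Pairwise (Function.onFun Disjoint E)) (w : ℂ) :
    ∑' n, (f '' E n).indicator (1 : ℂ → ENNReal) w ≤ p := by
  classical
  rw [ENNReal.tsum_eq_iSup_sum]
  refine iSup_le fun I => ?_
  have hpre : ∀ n, w ∈ f '' E n → ∃ x, x ∈ E n ∧ f x = w := fun _ h => h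
  choose! x hxE hxw using hpre
  let J := I.filter fun n => w ∈ f '' E n
  have hJ : ∀ n ∈ J, w ∈ f '' E n := fun n hn => (Finset.mem_filter.mp hn).2
  have hinj : InjOn x J := fun i hi j hj hij => by
    by_contra hne
    exact disjoint_left.mp (hdisj hne) (hxE i (hJ i hi)) (hij ▸ hxE j (hJ j hj))
  have hcard : J.card ≤ p := by
    rw [← Finset.card_image_of_injOn hinj]
    refine hf w _ fun t ht => ?_
    obtain ⟨n, hn, rfl⟩ := Finset.mem_image.mp ht
    exact ⟨hE n (hxE n (hJ n hn)), hxw n (hJ n hn)⟩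
  calc ∑ n ∈ I, (f '' E n).indicator (1 : ℂ → ENNReal) w = J.card := by
        simp only [indicator_apply, Pi.one_apply, Finset.sum_boole, J]
    _ ≤ p := mod_cast hcard

end PValentOn

section AreaFormula

variable {F F' : ℂ → ℂ} {Q : Set ℂ} {p : ℕ}

lemma abs_det_restrictScalars_toSpanSingleton (a : ℂ) :
    |((ContinuousLinearMap.toSpanSingleton ℂ a).restrictScalars ℝ : ℂ →L[ℝ] ℂ).det| =
      ‖a‖ ^ 2 := by
  rw [← abs_of_nonneg (sq_nonneg ‖a‖), ContinuousLinearMap.det,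
    ← LinearMap.det_toMatrix Complex.basisOneI, Matrix.det_fin_two]
  simp [LinearMap.toMatrix_apply, ← Complex.normSq_eq_norm_sq, Complex.normSq_apply]

lemma exists_measurable_partition_injOn (hQ : MeasurableSet Q)
    (hF : ∀ w ∈ Q, HasDerivAt F (F' w) w) (hF' : ∀ w ∈ Q, F' w ≠ 0) :
    ∃ E : ℕ → Set ℂ, (∀ n, MeasurableSet (E n)) ∧ (∀ n, InjOn F (E n)) ∧
      Pairwise (Function.onFun Disjoint E) ∧ ⋃ n, E n = Q := by
  classical
  let r (A : ℂ →L[ℝ] ℂ) : NNReal := if A 1 = 0 then 1 else ‖A 1‖₊ / 2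
  have hr (A : ℂ →L[ℝ] ℂ) : r A ≠ 0 := by
    by_cases h : A 1 = 0 <;> simp [r, h]
  obtain ⟨t, A, hdisj, hmeas, hcover, happrox, hA⟩ :=
    exists_partition_approximatesLinearOn_of_hasFDerivWithinAt F Q _
      (fun w hw => ((hF w hw).hasFDerivAt.restrictScalars ℝ).hasFDerivWithinAt) r hr
  refine ⟨fun n => Q ∩ t n, fun n => hQ.inter (hmeas n), fun n x hx y hy hxy => ?_,
    fun i j hij => (hdisj hij).mono inter_subset_right inter_subset_right, ?_⟩
  · obtain ⟨w, hw, hAw⟩ := hA ⟨x, hx.1⟩ n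
    have hbound := happrox n x hx y hy
    have hrw : r (A n) = ‖F' w‖₊ / 2 := by simp [r, hAw, hF' w hw]
    rw [hxy, hrw, hAw] at hbound
    have hpos : 0 < ‖F' w‖ := norm_pos_iff.mpr (hF' w hw)
    simp only [sub_self, zero_sub, norm_neg, ContinuousLinearMap.coe_restrictScalars',
      ContinuousLinearMap.toSpanSingleton_apply, smul_eq_mul, norm_mul, NNReal.coe_div,
      coe_nnnorm, NNReal.coe_ofNat] at hbound
    have : ‖x - y‖ ≤ 0 := by nlinarith [norm_nonneg (x - y)]
    exact sub_eq_zero.mp (norm_le_zero_iff.mp this)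
  · rw [← inter_iUnion, inter_eq_left.mpr hcover]

lemma PValentOn.lintegral_mul_comp_le (hp : PValentOn F Q p) (hQ : MeasurableSet Q)
    (hF : ∀ w ∈ Q, DifferentiableAt ℂ F w) {ψ : ℂ → ENNReal} (hψ : Measurable ψ) :
    ∫⁻ w in Q, ENNReal.ofReal (‖deriv F w‖ ^ 2) * ψ (F w) ≤ p * ∫⁻ w, ψ w := by
  let S : Set ℂ := {w | deriv F w ≠ 0}
  have hS : MeasurableSet S := (measurable_deriv F (measurableSet_singleton 0)).compl
  obtain ⟨E, hEmeas, hEinj, hEdisj, hEQ⟩ := exists_measurable_partition_injOn (hQ.inter hS)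
    (fun w hw => (hF w hw.1).hasDerivAt) fun w hw => hw.2
  have hEsub (n : ℕ) : E n ⊆ Q := (subset_iUnion E n).trans (hEQ ▸ inter_subset_left)
  have hderiv (n : ℕ) (w : ℂ) (hw : w ∈ E n) : HasFDerivWithinAt F
      ((ContinuousLinearMap.toSpanSingleton ℂ (deriv F w)).restrictScalars ℝ : ℂ →L[ℝ] ℂ)
      (E n) w :=
    ((hF w (hEsub n hw)).hasDerivAt.hasFDerivAt.restrictScalars ℝ).hasFDerivWithinAt
  have himage (n : ℕ) : MeasurableSet (F '' E n) :=
    measurable_image_of_fderivWithin (hEmeas n) (hderiv n) (hEinj n)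
  calc ∫⁻ w in Q, ENNReal.ofReal (‖deriv F w‖ ^ 2) * ψ (F w)
    _ = ∫⁻ w in Q ∩ S, ENNReal.ofReal (‖deriv F w‖ ^ 2) * ψ (F w) := by
        rw [← lintegral_inter_add_sdiff _ Q hS,
          setLIntegral_eq_zero (hQ.diff hS) fun w hw => ?_, add_zero]
        simp [not_not.mp hw.2]
    _ = ∑' n, ∫⁻ w in E n, ENNReal.ofReal (‖deriv F w‖ ^ 2) * ψ (F w) := by
        rw [← hEQ, lintegral_iUnion hEmeas hEdisj]
    _ = ∑' n, ∫⁻ w, (F '' E n).indicator 1 w * ψ w := by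
        congr with n
        have harea := lintegral_image_eq_lintegral_abs_det_fderiv_mul volume (hEmeas n)
          (hderiv n) (hEinj n) ψ
        simp only [abs_det_restrictScalars_toSpanSingleton] at harea
        rw [← harea, ← lintegral_indicator (himage n)]
        simp [← indicator_mul_left]
    _ = ∫⁻ w, (∑' n, (F '' E n).indicator 1 w) * ψ w := by
        simp only [← ENNReal.tsum_mul_right]
        exact (lintegral_tsum fun n =>
          ((measurable_one.indicator (himage n)).mul hψ).aemeasurable).symm
    _ ≤ ∫⁻ w, p * ψ w := by
        gcongr with w
        exact hp.tsum_indicator_image_le hEsub hEdisj w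
    _ = p * ∫⁻ w, ψ w := lintegral_const_mul _ hψ

end AreaFormula

/-- The function `½ log (1 + ‖w‖²)`, a smooth nonnegative substitute for `log⁺ ‖w‖`. -/
def softLog (w : ℂ) : ℝ := 1 / 2 * Real.log (1 + ‖w‖ ^ 2)

/-- The length of the gradient of `softLog ∘ F` at `w`, for a holomorphic function `F`. -/
def logSlope (F : ℂ → ℂ) (w : ℂ) : ℝ := ‖F w‖ * ‖deriv F w‖ / (1 + ‖F w‖ ^ 2)

/-- The Dirichlet energy of `softLog ∘ F` over `Q`, for a holomorphic function `F`. -/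
def logEnergy (F : ℂ → ℂ) (Q : Set ℂ) : ENNReal :=
  ∫⁻ w in Q, ENNReal.ofReal (logSlope F w ^ 2)

section SoftLog

variable {F : ℂ → ℂ} {w : ℂ} {V : ℝ}

lemma softLog_nonneg (w : ℂ) : 0 ≤ softLog w :=
  mul_nonneg (by norm_num) (Real.log_nonneg (by nlinarith [sq_nonneg ‖w‖]))

lemma softLog_le_iff (hV : 0 ≤ V) : softLog w ≤ V ↔ ‖w‖ ≤ √(rexp (2 * V) - 1) := by
  have hexp : 0 ≤ rexp (2 * V) - 1 := sub_nonneg.mpr (one_le_exp (by positivity))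
  rw [Real.le_sqrt (norm_nonneg w) hexp, le_sub_iff_add_le', ← Real.log_le_iff_le_exp
    (by positivity), softLog]
  constructor <;> intro h <;> linarith

lemma norm_le_exp_softLog (w : ℂ) : ‖w‖ ≤ rexp (softLog w) := by
  refine ((softLog_le_iff (softLog_nonneg w)).mp le_rfl).trans
    (Real.sqrt_le_iff.mpr ⟨(exp_pos _).le, ?_⟩)
  rw [← Real.exp_nat_mul]
  simp

lemma setIntegral_closedBall_fun_norm (g : ℝ → ℝ) {M : ℝ} (hM : 0 ≤ M) :
    ∫ z in closedBall (0 : ℂ) M, g ‖z‖ = 2 * π * ∫ y in (0 : ℝ)..M, y * g y := by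
  have hind (z : ℂ) : (closedBall (0 : ℂ) M).indicator (fun z => g ‖z‖) z =
      (Iic M).indicator g ‖z‖ := by
    classical simp [indicator_apply]
  rw [← integral_indicator measurableSet_closedBall, funext hind,
    integral_fun_norm_addHaar volume ((Iic M).indicator g), intervalIntegral.integral_of_le hM,
    ← Ioi_inter_Iic, ← setIntegral_indicator measurableSet_Iic]
  simp [Measure.real, mul_assoc, indicator_mul_right _ fun y : ℝ => y]

lemma lintegral_closedBall_sq_div_le {M : ℝ} (hM : 0 ≤ M) :
    ∫⁻ z in closedBall (0 : ℂ) M, ENNReal.ofReal (‖z‖ ^ 2 / (1 + ‖z‖ ^ 2) ^ 2) ≤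
      ENNReal.ofReal (π * Real.log (1 + M ^ 2)) := by
  have hcont : Continuous fun z : ℂ => ‖z‖ ^ 2 / (1 + ‖z‖ ^ 2) ^ 2 :=
    Continuous.div (by fun_prop) (by fun_prop) fun z => by positivity
  rw [← ofReal_integral_eq_lintegral_ofReal
    (hcont.continuousOn.integrableOn_compact (isCompact_closedBall 0 M))
    (Filter.Eventually.of_forall fun z => by positivity)]
  refine ENNReal.ofReal_le_ofReal ?_
  have hderiv (y : ℝ) : HasDerivAt (fun y => 1 / 2 * Real.log (1 + y ^ 2)) (y / (1 + y ^ 2)) y := by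
    have hsq : HasDerivAt (fun y : ℝ => 1 + y ^ 2) (2 * y) y := by
      simpa using (hasDerivAt_pow 2 y).const_add 1
    exact ((hsq.log (by positivity)).const_mul (1 / 2)).congr_deriv (by ring)
  have hint : Continuous fun y : ℝ => y / (1 + y ^ 2) :=
    Continuous.div (by fun_prop) (by fun_prop) fun y => by positivity
  have hint' : Continuous fun y : ℝ => y * (y ^ 2 / (1 + y ^ 2) ^ 2) :=
    Continuous.mul continuous_id
      (Continuous.div (by fun_prop) (by fun_prop) fun y => by positivity)
  calc ∫ z in closedBall (0 : ℂ) M, ‖z‖ ^ 2 / (1 + ‖z‖ ^ 2) ^ 2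
    _ = 2 * π * ∫ y in (0 : ℝ)..M, y * (y ^ 2 / (1 + y ^ 2) ^ 2) :=
        setIntegral_closedBall_fun_norm (fun y => y ^ 2 / (1 + y ^ 2) ^ 2) hM
    _ ≤ 2 * π * ∫ y in (0 : ℝ)..M, y / (1 + y ^ 2) := by
        refine mul_le_mul_of_nonneg_left (intervalIntegral.integral_mono_on hM
          (hint'.intervalIntegrable _ _) (hint.intervalIntegrable _ _) fun y hy => ?_)
          (by positivity)
        rw [div_eq_mul_inv y]
        refine mul_le_mul_of_nonneg_left ?_ hy.1
        rw [inv_eq_one_div, div_le_div_iff₀ (by positivity) (by positivity)]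
        nlinarith [sq_nonneg y]
    _ = π * Real.log (1 + M ^ 2) := by
        rw [intervalIntegral.integral_eq_sub_of_hasDerivAt (fun y _ => hderiv y)
          (hint.intervalIntegrable _ _), zero_pow two_ne_zero, add_zero, Real.log_one]
        ring

lemma PValentOn.logEnergy_le {Q : Set ℂ} {p : ℕ} (hp : PValentOn F Q p)
    (hQ : MeasurableSet Q) (hF : ∀ w ∈ Q, DifferentiableAt ℂ F w) (hV : 0 ≤ V)
    (hFV : ∀ w ∈ Q, softLog (F w) ≤ V) :
    logEnergy F Q ≤ ENNReal.ofReal (2 * π * p * V) := by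
  let M := √(rexp (2 * V) - 1)
  have hM : 1 + M ^ 2 = rexp (2 * V) := by
    rw [Real.sq_sqrt (sub_nonneg.mpr (one_le_exp (by positivity)))]
    ring
  let φ : ℂ → ENNReal := fun z => ENNReal.ofReal (‖z‖ ^ 2 / (1 + ‖z‖ ^ 2) ^ 2)
  calc logEnergy F Q
    _ = ∫⁻ w in Q, ENNReal.ofReal (‖deriv F w‖ ^ 2) * (closedBall 0 M).indicator φ (F w) := by
        refine setLIntegral_congr_fun hQ fun w hw => ?_
        have hmem : F w ∈ closedBall 0 M :=
          mem_closedBall_zero_iff.mpr ((softLog_le_iff hV).mp (hFV w hw))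
        simp only [indicator_of_mem hmem, φ]
        rw [← ENNReal.ofReal_mul (by positivity), logSlope, div_pow, mul_pow, mul_div_left_comm,
          mul_div_assoc]
    _ ≤ p * ∫⁻ z, (closedBall 0 M).indicator φ z :=
        hp.lintegral_mul_comp_le hQ hF (Measurable.indicator (by fun_prop) measurableSet_closedBall)
    _ ≤ p * ENNReal.ofReal (π * Real.log (1 + M ^ 2)) := by
        rw [lintegral_indicator measurableSet_closedBall]
        gcongr
        exact lintegral_closedBall_sq_div_le (Real.sqrt_nonneg _)
    _ = ENNReal.ofReal (2 * π * p * V) := by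
        rw [hM, Real.log_exp, ← ENNReal.ofReal_natCast p,
          ← ENNReal.ofReal_mul (Nat.cast_nonneg p)]
        ring_nf

end SoftLog

section LengthArea

variable {F : ℂ → ℂ} {a b c d D : ℝ}

lemma sq_intervalIntegral_le {k : ℝ → ℝ} (hab : a ≤ b) (hk : ContinuousOn k (Icc a b)) :
    (∫ x in a..b, k x) ^ 2 ≤ (b - a) * ∫ x in a..b, k x ^ 2 := by
  rcases hab.eq_or_lt with rfl | hlt
  · simp
  rw [← uIcc_of_le hab] at hk
  have : 0 < b - a := sub_pos.mpr hlt
  set m := (∫ x in a..b, k x) / (b - a) with hm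
  have hmean : ∫ x in a..b, k x = m * (b - a) := by rw [hm]; field_simp
  have hvar : ∫ x in a..b, (k x - m) ^ 2 =
      (∫ x in a..b, k x ^ 2) - 2 * m * (∫ x in a..b, k x) + m ^ 2 * (b - a) := by
    have hexpand (x : ℝ) : (k x - m) ^ 2 = k x ^ 2 - 2 * m * k x + m ^ 2 := by ring
    simp only [hexpand]
    rw [intervalIntegral.integral_add, intervalIntegral.integral_sub,
      intervalIntegral.integral_const_mul, intervalIntegral.integral_const]
    · simp only [smul_eq_mul]; ring
    all_goals exact ContinuousOn.intervalIntegrable (by fun_prop)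
  have hnonneg : 0 ≤ ∫ x in a..b, (k x - m) ^ 2 :=
    intervalIntegral.integral_nonneg hab fun x _ => sq_nonneg _
  rw [hvar, hmean] at hnonneg
  rw [hmean]
  nlinarith

lemma hasDerivAt_softLog_comp_line {P q : ℂ} {t : ℝ} (hq : ‖q‖ = 1)
    (hF : DifferentiableAt ℂ F (P + t * q)) :
    ∃ δ, HasDerivAt (fun t : ℝ => softLog (F (P + t * q))) δ t ∧
      |δ| ≤ logSlope F (P + t * q) := by
  have hline : HasDerivAt (fun z : ℂ => P + z * q) q (t : ℂ) := by
    simpa using ((hasDerivAt_id (t : ℂ)).mul_const q).const_add P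
  have hFline : HasDerivAt (fun z : ℂ => F (P + z * q)) (deriv F (P + t * q) * q) (t : ℂ) :=
    HasDerivAt.comp (h₂ := F) (t : ℂ) hF.hasDerivAt hline
  refine ⟨_, ((hFline.comp_ofReal.norm_sq.const_add 1).log (by positivity)).const_mul (1 / 2),
    ?_⟩
  have hinner := abs_real_inner_le_norm (F (P + t * q)) (deriv F (P + t * q) * q)
  rw [norm_mul, hq, mul_one] at hinner
  rw [one_div_mul_eq_div, div_div, mul_comm _ (2 : ℝ), mul_div_mul_left _ _ two_ne_zero, abs_div,
    abs_of_pos (by positivity : (0 : ℝ) < 1 + ‖F (P + t * q)‖ ^ 2)]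
  exact div_le_div_of_nonneg_right hinner (by positivity)

lemma sub_le_integral_of_abs_hasDerivAt_le {u φ : ℝ → ℝ} (hφ : ContinuousOn φ (Icc a b))
    (hu : ∀ t ∈ Icc a b, ∃ δ, HasDerivAt u δ t ∧ |δ| ≤ φ t) {s t : ℝ} (hs : s ∈ Icc a b)
    (ht : t ∈ Icc a b) : u s - u t ≤ ∫ x in a..b, φ x := by
  choose! δ hδ hδφ using hu
  have hmono {x y : ℝ} (hx : x ∈ Icc a b) (hy : y ∈ Icc a b) (hxy : x ≤ y) :
      ∫ τ in x..y, φ τ ≤ ∫ τ in a..b, φ τ := by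
    refine intervalIntegral.integral_mono_interval hx.1 hxy hy.2 ?_
      (hφ.intervalIntegrable_of_Icc (hx.1.trans hx.2))
    filter_upwards [ae_restrict_mem measurableSet_Ioc] with τ hτ
    exact (abs_nonneg _).trans (hδφ τ (Ioc_subset_Icc_self hτ))
  rcases le_total t s with hts | hst
  · have hsub : Icc t s ⊆ Icc a b := Icc_subset_Icc ht.1 hs.2
    refine le_trans ?_ (hmono ht hs hts)
    exact intervalIntegral.sub_le_integral_of_hasDeriv_right_of_le hts
      (fun x hx => (hδ x (hsub hx)).continuousAt.continuousWithinAt)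
      (fun x hx => (hδ x (hsub (Ioo_subset_Icc_self hx))).hasDerivWithinAt)
      (hφ.mono hsub).integrableOn_Icc
      fun x hx => (le_abs_self _).trans (hδφ x (hsub (Ioo_subset_Icc_self hx)))
  · have hsub : Icc s t ⊆ Icc a b := Icc_subset_Icc hs.1 ht.2
    refine le_trans ?_ (hmono hs ht hst)
    have := intervalIntegral.sub_le_integral_of_hasDeriv_right_of_le hst
      (fun x hx => (hδ x (hsub hx)).neg.continuousAt.continuousWithinAt)
      (fun x hx => (hδ x (hsub (Ioo_subset_Icc_self hx))).neg.hasDerivWithinAt)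
      (hφ.mono hsub).integrableOn_Icc
      fun x hx => (neg_le_abs _).trans (hδφ x (hsub (Ioo_subset_Icc_self hx)))
    simpa [neg_add_eq_sub] using this

lemma continuousAt_logSlope {w : ℂ} (hF : AnalyticAt ℂ F w) :
    ContinuousAt (logSlope F) w := by
  have := hF.continuousAt
  have := hF.deriv.continuousAt
  unfold logSlope
  exact ContinuousAt.div (by fun_prop) (by fun_prop) (by positivity)

lemma softLog_le_add_sqrt_of_line {P q : ℂ} (hq : ‖q‖ = 1)
    (hF : ∀ t ∈ Icc a b, AnalyticAt ℂ F (P + t * q)) (hD : 0 ≤ D)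
    (hFD : ∫⁻ t in Icc a b, ENNReal.ofReal (logSlope F (P + t * q) ^ 2) ≤ ENNReal.ofReal D)
    {s t : ℝ} (hs : s ∈ Icc a b) (ht : t ∈ Icc a b) :
    softLog (F (P + s * q)) ≤ softLog (F (P + t * q)) + √((b - a) * D) := by
  have hab : a ≤ b := hs.1.trans hs.2
  let φ : ℝ → ℝ := fun t => logSlope F (P + t * q)
  have hφ : ContinuousOn φ (Icc a b) := fun t ht =>
    (ContinuousAt.comp (f := fun t : ℝ => P + t * q) (continuousAt_logSlope (hF t ht))
      (by fun_prop)).continuousWithinAt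
  have hsq : ∫ t in a..b, φ t ^ 2 ≤ D := by
    have hint : IntegrableOn (fun t => φ t ^ 2) (Icc a b) := (hφ.pow 2).integrableOn_Icc
    rw [intervalIntegral.integral_of_le hab, ← integral_Icc_eq_integral_Ioc,
      ← ENNReal.ofReal_le_ofReal_iff hD, ofReal_integral_eq_lintegral_ofReal hint
        (Filter.Eventually.of_forall fun t => sq_nonneg _)]
    exact hFD
  have hlen : ∫ t in a..b, φ t ≤ √((b - a) * D) :=
    Real.le_sqrt_of_sq_le ((sq_intervalIntegral_le hab hφ).trans
      (mul_le_mul_of_nonneg_left hsq (sub_nonneg.mpr hab)))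
  have := sub_le_integral_of_abs_hasDerivAt_le hφ
    (fun t ht => hasDerivAt_softLog_comp_line hq (hF t ht).differentiableAt) hs ht
  linarith

lemma exists_mem_Ioo_setLIntegral_le {f : ℝ × ℝ → ENNReal} {A B : Set ℝ} {a b D : ℝ}
    (hab : a < b) (hA : Ioo a b ⊆ A) (hf : AEMeasurable f (volume.restrict (A ×ˢ B)))
    (hfD : ∫⁻ z in A ×ˢ B, f z ≤ ENNReal.ofReal D) :
    ∃ x ∈ Ioo a b, ∫⁻ y in B, f (x, y) ≤ ENNReal.ofReal (D / (b - a)) := by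
  rw [Measure.volume_eq_prod, ← Measure.prod_restrict] at hf hfD
  rw [lintegral_prod _ hf] at hfD
  obtain ⟨x, hx, hle⟩ := exists_le_setLAverage (μ := volume) (s := Ioo a b)
    (by simpa using hab) (by simp)
    (hf.lintegral_prod_right'.mono_measure (Measure.restrict_mono hA le_rfl))
  refine ⟨x, hx, hle.trans ?_⟩
  rw [setLAverage_eq, Real.volume_Ioo, ENNReal.ofReal_div_of_pos (sub_pos.mpr hab)]
  gcongr
  exact (lintegral_mono_set hA).trans hfD

lemma add_mul_I_mem_reProdIm {x y : ℝ} {A B : Set ℝ} :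
    (x + y * I : ℂ) ∈ A ×ℂ B ↔ x ∈ A ∧ y ∈ B := by
  simp [mem_reProdIm]

lemma setLIntegral_reProdIm (f : ℂ → ENNReal) (A B : Set ℝ) :
    ∫⁻ w in A ×ℂ B, f w = ∫⁻ z in A ×ˢ B, f (z.1 + z.2 * I) := by
  have hpre : A ×ˢ B = measurableEquivRealProd.symm ⁻¹' (A ×ℂ B) := by
    ext z
    simp [mem_reProdIm]
  have hsymm := volume_preserving_equiv_real_prod.symm measurableEquivRealProd
  rw [hpre, ← hsymm.setLIntegral_comp_preimage_emb measurableEquivRealProd.symm.measurableEmbedding]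
  simp [← mk_eq_add_mul_I]

lemma aemeasurable_logSlope_sq (hF : AnalyticOnNhd ℂ F (Icc a b ×ℂ Icc c d)) :
    AEMeasurable (fun z : ℝ × ℝ => ENNReal.ofReal (logSlope F (z.1 + z.2 * I) ^ 2))
      (volume.restrict (Icc a b ×ˢ Icc c d)) := by
  refine ContinuousOn.aemeasurable (fun z hz => ContinuousAt.continuousWithinAt ?_)
    (measurableSet_Icc.prod measurableSet_Icc)
  have := ContinuousAt.comp (f := fun z : ℝ × ℝ => (z.1 + z.2 * I : ℂ))
    (continuousAt_logSlope (hF _ (add_mul_I_mem_reProdIm.mpr hz))) (by fun_prop)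
  exact ENNReal.continuous_ofReal.continuousAt.comp (this.pow 2)

lemma exists_vertical_line (hF : AnalyticOnNhd ℂ F (Icc a b ×ℂ Icc c d)) (hD : 0 ≤ D)
    (hFD : logEnergy F (Icc a b ×ℂ Icc c d) ≤ ENNReal.ofReal D) {a' b' : ℝ} (hab : a' < b')
    (ha : a ≤ a') (hb : b' ≤ b) :
    ∃ x ∈ Ioo a' b', ∀ y ∈ Icc c d, ∀ t ∈ Icc c d,
      softLog (F (x + y * I)) ≤ softLog (F (x + t * I)) + √((d - c) * (D / (b' - a'))) := by
  have hsub : Ioo a' b' ⊆ Icc a b := Ioo_subset_Icc_self.trans (Icc_subset_Icc ha hb)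
  obtain ⟨x, hx, hxD⟩ := exists_mem_Ioo_setLIntegral_le hab hsub (aemeasurable_logSlope_sq hF)
    ((setLIntegral_reProdIm _ _ _).symm.trans_le hFD)
  exact ⟨x, hx, fun y hy t ht => softLog_le_add_sqrt_of_line norm_I
    (fun s hs => hF _ (add_mul_I_mem_reProdIm.mpr ⟨hsub hx, hs⟩))
    (div_nonneg hD (sub_nonneg.mpr hab.le)) hxD hy ht⟩

lemma exists_horizontal_line (hF : AnalyticOnNhd ℂ F (Icc a b ×ℂ Icc c d)) (hD : 0 ≤ D)
    (hFD : logEnergy F (Icc a b ×ℂ Icc c d) ≤ ENNReal.ofReal D) {c' d' : ℝ} (hcd : c' < d')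
    (hc : c ≤ c') (hd : d' ≤ d) :
    ∃ y ∈ Ioo c' d', ∀ x ∈ Icc a b, ∀ t ∈ Icc a b,
      softLog (F (x + y * I)) ≤ softLog (F (t + y * I)) + √((b - a) * (D / (d' - c'))) := by
  have hsub : Ioo c' d' ⊆ Icc c d := Ioo_subset_Icc_self.trans (Icc_subset_Icc hc hd)
  have hswap : MeasurePreserving Prod.swap (volume.restrict (Icc c d ×ˢ Icc a b))
      (volume.restrict (Icc a b ×ˢ Icc c d)) := by
    simpa only [Measure.volume_eq_prod, Measure.prod_restrict] using
      Measure.measurePreserving_swap (μ := volume.restrict (Icc c d))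
        (ν := volume.restrict (Icc a b))
  rw [logEnergy, setLIntegral_reProdIm, ← hswap.lintegral_comp_emb
    MeasurableEquiv.prodComm.measurableEmbedding] at hFD
  obtain ⟨y, hy, hyD⟩ := exists_mem_Ioo_setLIntegral_le hcd hsub
    ((aemeasurable_logSlope_sq hF).comp_quasiMeasurePreserving
      hswap.quasiMeasurePreserving) hFD
  have hline (t : ℝ) : (t + y * I : ℂ) = y * I + t * 1 := by ring
  refine ⟨y, hy, fun x hx t ht => ?_⟩
  rw [hline, hline]
  refine softLog_le_add_sqrt_of_line norm_one (fun s hs => ?_)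
    (div_nonneg hD (sub_nonneg.mpr hcd.le)) ?_ hx ht
  · exact hline s ▸ hF _ (add_mul_I_mem_reProdIm.mpr ⟨hs, hsub hy⟩)
  · simpa only [Function.comp_apply, Prod.swap_prod_mk, hline] using hyD

lemma softLog_le_of_frontier_rectangle (hF : AnalyticOnNhd ℂ F (Icc a b ×ℂ Icc c d)) {C : ℝ}
    (hC : 0 ≤ C) (hvert : ∀ x ∈ ({a, b} : Set ℝ), ∀ y ∈ Icc c d, softLog (F (x + y * I)) ≤ C)
    (hhor : ∀ y ∈ ({c, d} : Set ℝ), ∀ x ∈ Icc a b, softLog (F (x + y * I)) ≤ C)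
    (hab : a < b) (hcd : c < d) {w : ℂ} (hw : w ∈ Icc a b ×ℂ Icc c d) : softLog (F w) ≤ C := by
  have hclosure : closure (Ioo a b ×ℂ Ioo c d) = Icc a b ×ℂ Icc c d := by
    rw [closure_reProdIm, closure_Ioo hab.ne, closure_Ioo hcd.ne]
  rw [softLog_le_iff hC]
  refine Complex.norm_le_of_forall_mem_frontier_norm_le
    ((isBounded_Ioo a b).reProdIm (isBounded_Ioo c d))
    (DifferentiableOn.diffContOnCl (hclosure ▸ hF.differentiableOn)) (fun z hz => ?_)
    (hclosure ▸ hw)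
  rw [frontier_reProdIm, closure_Ioo hab.ne, closure_Ioo hcd.ne, frontier_Ioo hab,
    frontier_Ioo hcd] at hz
  rw [← softLog_le_iff hC, ← re_add_im z]
  rcases hz with ⟨hre, him⟩ | ⟨hre, him⟩
  · exact hhor _ him _ hre
  · exact hvert _ hre _ him

end LengthArea

section Rectangle

variable {F : ℂ → ℂ} {X s h B D : ℝ}

lemma exists_horizontal_line_softLog_le (hX : 0 ≤ X) (hs : 0 < s) (hh : 0 < h) (hD : 0 ≤ D)
    (hF : AnalyticOnNhd ℂ F (Icc (-s) (X + s) ×ℂ Icc (-h) h))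
    (hFD : logEnergy F (Icc (-s) (X + s) ×ℂ Icc (-h) h) ≤ ENNReal.ofReal D)
    (hB : ∀ x ∈ Icc (-s) s, softLog (F x) ≤ B) :
    ∃ t ∈ Ioo (-h) h, ∀ x ∈ Icc (-s) (X + s),
      softLog (F (x + t * I)) ≤ B + √(h * D / s) + √((X + 2 * s) * D / (2 * h)) := by
  obtain ⟨x₀, hx₀, hvert⟩ := exists_vertical_line hF hD hFD (neg_lt_self hs) le_rfl
    (by linarith : s ≤ X + s)
  obtain ⟨t, ht, hhor⟩ := exists_horizontal_line hF hD hFD (neg_lt_self hh) le_rfl le_rfl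
  refine ⟨t, ht, fun x hx => ?_⟩
  have hstart : softLog (F (x₀ + (0 : ℝ) * I)) ≤ B := by
    simpa using hB x₀ (Ioo_subset_Icc_self hx₀)
  have hup := hvert t (Ioo_subset_Icc_self ht) 0 ⟨by linarith, hh.le⟩
  have hacross := hhor x hx x₀ ⟨hx₀.1.le, by linarith [hx₀.2]⟩
  have hupLength : (h - -h) * (D / (s - -s)) = h * D / s := by field_simp
  have hacrossLength : (X + s - -s) * (D / (h - -h)) = (X + 2 * s) * D / (2 * h) := by ring
  rw [hupLength] at hup
  rw [hacrossLength] at hacross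
  linarith

-- Four lines along which `softLog ∘ F` varies little bound a rectangle around `X`, to which the
-- maximum principle applies.
lemma softLog_le_of_horizontal_line (hs : 0 < s) (hh : 0 < h) (hD : 0 ≤ D)
    (hF : AnalyticOnNhd ℂ F (Icc (X - s) (X + s) ×ℂ Icc (-h) h))
    (hFD : logEnergy F (Icc (X - s) (X + s) ×ℂ Icc (-h) h) ≤ ENNReal.ofReal D) {t : ℝ}
    (ht : t ∈ Icc (-h) h) (hB : ∀ x ∈ Icc (X - s) (X + s), softLog (F (x + t * I)) ≤ B) :
    softLog (F X) ≤ B + √(2 * h * D / s) + √(2 * s * D / h) := by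
  obtain ⟨x₁, ⟨hx₁, hx₁X⟩, hleft⟩ := exists_vertical_line hF hD hFD (sub_lt_self X hs) le_rfl
    (by linarith)
  obtain ⟨x₂, ⟨hXx₂, hx₂⟩, hright⟩ := exists_vertical_line hF hD hFD (lt_add_of_pos_right X hs)
    (by linarith) le_rfl
  obtain ⟨y₁, ⟨hy₁, hy₁0⟩, hbot⟩ := exists_horizontal_line hF hD hFD (neg_neg_of_pos hh) le_rfl
    hh.le
  obtain ⟨y₂, ⟨h0y₂, hy₂⟩, htop⟩ := exists_horizontal_line hF hD hFD hh (by linarith) le_rfl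
  have hxs : Icc x₁ x₂ ⊆ Icc (X - s) (X + s) := Icc_subset_Icc hx₁.le hx₂.le
  have hys : Icc y₁ y₂ ⊆ Icc (-h) h := Icc_subset_Icc hy₁.le hy₂.le
  have hx₁mem : x₁ ∈ Icc (X - s) (X + s) := hxs (left_mem_Icc.mpr (hx₁X.trans hXx₂).le)
  have hx₂mem : x₂ ∈ Icc (X - s) (X + s) := hxs (right_mem_Icc.mpr (hx₁X.trans hXx₂).le)
  have hvertLength : (h + h) * (D / s) = 2 * h * D / s := by ring
  have hhorLength : (s + s) * (D / h) = 2 * s * D / h := by ring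
  simp only [sub_neg_eq_add, sub_sub_cancel, add_sub_cancel_left, add_sub_sub_cancel, zero_add,
    sub_zero, hvertLength, hhorLength] at hleft hright hbot htop
  have hvert : ∀ x ∈ ({x₁, x₂} : Set ℝ), ∀ y ∈ Icc (-h) h,
      softLog (F (x + y * I)) ≤ B + √(2 * h * D / s) := by
    rintro x (rfl | rfl) y hy
    · linarith [hleft y hy t ht, hB x hx₁mem]
    · linarith [hright y hy t ht, hB x hx₂mem]
  have hhor : ∀ y ∈ ({y₁, y₂} : Set ℝ), ∀ x ∈ Icc (X - s) (X + s),
      softLog (F (x + y * I)) ≤ B + √(2 * h * D / s) + √(2 * s * D / h) := by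
    rintro y (rfl | rfl) x hx
    · linarith [hbot x hx x₁ hx₁mem, hvert x₁ (Or.inl rfl) y ⟨hy₁.le, by linarith⟩]
    · linarith [htop x hx x₁ hx₁mem, hvert x₁ (Or.inl rfl) y ⟨by linarith, hy₂.le⟩]
  have hXmem : (X : ℂ) ∈ Icc x₁ x₂ ×ℂ Icc y₁ y₂ := by
    simp [mem_reProdIm, hx₁X.le, hXx₂.le, hy₁0.le, h0y₂.le]
  have hBnonneg : 0 ≤ B := (softLog_nonneg _).trans (hB x₁ hx₁mem)
  have hsqrt := Real.sqrt_nonneg (2 * s * D / h)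
  exact softLog_le_of_frontier_rectangle (hF.mono fun w hw => ⟨hxs hw.1, hys hw.2⟩)
    (by positivity) (fun x hx y hy => (hvert x hx y (hys hy)).trans (by linarith))
    (fun y hy x hx => hhor y hy x (hxs hx)) (hx₁X.trans hXx₂) (hy₁0.trans h0y₂) hXmem

lemma softLog_le_of_logEnergy_rectangle (hX : 0 ≤ X) (hs : 0 < s) (hh : 0 < h) (hD : 0 ≤ D)
    (hF : AnalyticOnNhd ℂ F (Icc (-s) (X + s) ×ℂ Icc (-h) h))
    (hFD : logEnergy F (Icc (-s) (X + s) ×ℂ Icc (-h) h) ≤ ENNReal.ofReal D)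
    (hB : ∀ x ∈ Icc (-s) s, softLog (F x) ≤ B) :
    softLog (F X) ≤ B + √(h * D / s) + √((X + 2 * s) * D / (2 * h)) + √(2 * h * D / s) +
      √(2 * s * D / h) := by
  have hnear : Icc (X - s) (X + s) ⊆ Icc (-s) (X + s) := Icc_subset_Icc (by linarith) le_rfl
  have hnearRect : Icc (X - s) (X + s) ×ℂ Icc (-h) h ⊆ Icc (-s) (X + s) ×ℂ Icc (-h) h :=
    fun w hw => ⟨hnear hw.1, hw.2⟩
  obtain ⟨t, ht, hcross⟩ := exists_horizontal_line_softLog_le hX hs hh hD hF hFD hB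
  exact softLog_le_of_horizontal_line hs hh hD (hF.mono hnearRect)
    ((lintegral_mono_set hnearRect).trans hFD) (Ioo_subset_Icc_self ht)
    fun x hx => hcross x (hnear hx)

end Rectangle

section Strip

/-- The map `w ↦ tanh (w / 2)`, which sends the strip `|im w| < π / 2` conformally onto the unit
disc and the real axis onto the diameter `(-1, 1)`. -/
def stripMap (w : ℂ) : ℂ := (cexp w - 1) / (cexp w + 1)

variable {w : ℂ} {h : ℝ}

lemma exp_re_pos_of_abs_im_lt (hw : |w.im| < π / 2) : 0 < (cexp w).re := by
  rw [Complex.exp_re]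
  exact mul_pos (Real.exp_pos _) (Real.cos_pos_of_mem_Ioo (abs_lt.mp hw))

lemma exp_add_one_ne_zero (hw : |w.im| < π / 2) : cexp w + 1 ≠ 0 := fun hzero => by
  have hre := congrArg Complex.re hzero
  simp only [add_re, one_re, zero_re] at hre
  linarith [exp_re_pos_of_abs_im_lt hw]

lemma injOn_stripMap : InjOn stripMap {w | |w.im| < π / 2} := by
  intro w hw z hz hwz
  rw [stripMap, stripMap, div_eq_div_iff (exp_add_one_ne_zero hw) (exp_add_one_ne_zero hz)] at hwz
  obtain ⟨hw₁, hw₂⟩ := abs_lt.mp (mem_ofPred.mp hw)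
  obtain ⟨hz₁, hz₂⟩ := abs_lt.mp (mem_ofPred.mp hz)
  have := Real.pi_pos
  exact Complex.exp_inj_of_neg_pi_lt_of_le_pi (by linarith) (by linarith) (by linarith)
    (by linarith) (by linear_combination hwz / 2)

lemma analyticAt_stripMap (hw : |w.im| < π / 2) : AnalyticAt ℂ stripMap w :=
  AnalyticAt.div (f := fun w => cexp w - 1) (g := fun w => cexp w + 1) (by fun_prop) (by fun_prop)
    (exp_add_one_ne_zero hw)

lemma one_sub_norm_stripMap_sq (hw : |w.im| < π / 2) :
    1 - ‖stripMap w‖ ^ 2 = 4 * (rexp w.re * Real.cos w.im) / ‖cexp w + 1‖ ^ 2 := by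
  have hne : ‖cexp w + 1‖ ^ 2 ≠ 0 := pow_ne_zero 2 (norm_ne_zero_iff.mpr (exp_add_one_ne_zero hw))
  rw [stripMap, norm_div, div_pow, one_sub_div hne, ← Complex.exp_re, Complex.sq_norm,
    Complex.sq_norm]
  simp only [normSq_apply, add_re, sub_re, add_im, sub_im, one_re, one_im]
  ring

lemma norm_stripMap_lt_one (hw : |w.im| < π / 2) : ‖stripMap w‖ < 1 := by
  have hcos := Real.cos_pos_of_mem_Ioo (abs_lt.mp hw)
  have hpos : 0 < ‖cexp w + 1‖ := norm_pos_iff.mpr (exp_add_one_ne_zero hw)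
  have hsq : 0 < 1 - ‖stripMap w‖ ^ 2 := by rw [one_sub_norm_stripMap_sq hw]; positivity
  nlinarith [norm_nonneg (stripMap w)]

lemma exp_neg_abs_mul_sq_le (x : ℝ) : rexp (-|x|) * (rexp x + 1) ^ 2 ≤ 4 * rexp x := by
  rcases le_total 0 x with hx | hx
  · rw [abs_of_nonneg hx, Real.exp_neg, inv_mul_le_iff₀ (Real.exp_pos x)]
    nlinarith [Real.one_le_exp hx]
  · rw [abs_of_nonpos hx, neg_neg]
    have hsq : (rexp x + 1) ^ 2 ≤ 4 := by
      nlinarith [Real.exp_pos x, Real.exp_le_one_iff.mpr hx]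
    nlinarith [Real.exp_pos x]

lemma cos_mul_exp_le_one_sub_norm_stripMap (hh : h < π / 2) (hw : |w.im| ≤ h) :
    Real.cos h / 2 * rexp (-|w.re|) ≤ 1 - ‖stripMap w‖ := by
  have hwπ : |w.im| < π / 2 := hw.trans_lt hh
  have hcos : Real.cos h ≤ Real.cos w.im := by
    rw [← Real.cos_abs w.im]
    exact Real.cos_le_cos_of_nonneg_of_le_pi (abs_nonneg _) (by linarith [Real.pi_pos]) hw
  have hcos_pos : 0 < Real.cos h :=
    Real.cos_pos_of_mem_Ioo ⟨by linarith [abs_nonneg w.im], hh⟩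
  have hpos : 0 < ‖cexp w + 1‖ := norm_pos_iff.mpr (exp_add_one_ne_zero hwπ)
  have hnorm : ‖cexp w + 1‖ ≤ rexp w.re + 1 := by
    simpa [Complex.norm_exp] using norm_add_le (cexp w) 1
  have hsq : Real.cos h * rexp (-|w.re|) ≤ 1 - ‖stripMap w‖ ^ 2 := by
    rw [one_sub_norm_stripMap_sq hwπ, le_div_iff₀ (by positivity)]
    calc Real.cos h * rexp (-|w.re|) * ‖cexp w + 1‖ ^ 2
        ≤ Real.cos h * rexp (-|w.re|) * (rexp w.re + 1) ^ 2 := by gcongr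
      _ = Real.cos h * (rexp (-|w.re|) * (rexp w.re + 1) ^ 2) := by ring
      _ ≤ Real.cos w.im * (4 * rexp w.re) :=
        mul_le_mul hcos (exp_neg_abs_mul_sq_le w.re) (by positivity) (hcos_pos.le.trans hcos)
      _ = 4 * (rexp w.re * Real.cos w.im) := by ring
  nlinarith [norm_nonneg (stripMap w), norm_stripMap_lt_one hwπ]

lemma log_two_div_cos_nonneg (h₀ : 0 ≤ h) (hh : h < π / 2) : 0 ≤ Real.log (2 / Real.cos h) := by
  have hcos : 0 < Real.cos h := Real.cos_pos_of_mem_Ioo ⟨by linarith, hh⟩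
  exact Real.log_nonneg (by rw [le_div_iff₀ hcos]; linarith [Real.cos_le_one h])

lemma neg_log_one_sub_norm_stripMap_le (hh : h < π / 2) (hw : |w.im| ≤ h) :
    -Real.log (1 - ‖stripMap w‖) ≤ |w.re| + Real.log (2 / Real.cos h) := by
  have hcos : 0 < Real.cos h := Real.cos_pos_of_mem_Ioo ⟨by linarith [abs_nonneg w.im], hh⟩
  have hlog := Real.log_le_log (by positivity) (cos_mul_exp_le_one_sub_norm_stripMap hh hw)
  rw [Real.log_mul (by positivity) (by positivity), Real.log_exp, ← inv_div, Real.log_inv] at hlog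
  linarith

lemma norm_stripMap_ofReal_lt {x : ℝ} (hx : |x| ≤ 1 / 8) : ‖stripMap x‖ < 1 / 4 := by
  have hreal : stripMap x = ((rexp x - 1) / (rexp x + 1) : ℝ) := by
    rw [stripMap]; push_cast; rfl
  have hexp := Real.abs_exp_sub_one_le (x := x) (by linarith)
  have hpos := Real.exp_pos x
  rw [hreal, Complex.norm_real, Real.norm_eq_abs, abs_div,
    abs_of_pos (by positivity : 0 < rexp x + 1), div_lt_iff₀ (by positivity)]
  linarith [(abs_le.mp hexp).1]

lemma stripMap_log {r : ℝ} (hr₀ : 0 ≤ r) (hr₁ : r < 1) :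
    stripMap (Real.log ((1 + r) / (1 - r)) : ℝ) = r := by
  have hsub : 0 < 1 - r := by linarith
  have hreal : stripMap (Real.log ((1 + r) / (1 - r)) : ℝ) =
      (((1 + r) / (1 - r) - 1) / ((1 + r) / (1 - r) + 1) : ℝ) := by
    rw [stripMap, ← Complex.ofReal_exp, Real.exp_log (by positivity)]; push_cast; rfl
  rw [hreal]
  congr 1
  field_simp
  ring

end Strip

/-- `softLog (f z) ≤ K * (E + log (1 / (1 - ‖z‖)))` in the unit disc: up to a constant factor, `‖f‖`
grows at most like `(1 - ‖z‖) ^ (-K)`. -/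
def HasLogGrowth (f : ℂ → ℂ) (K E : ℝ) : Prop :=
  ∀ z ∈ ball (0 : ℂ) 1, softLog (f z) ≤ K * (E - Real.log (1 - ‖z‖))

section Growth

lemma softLog_le_one {w : ℂ} (hw : ‖w‖ ≤ 1) : softLog w ≤ 1 := by
  have hlog := Real.log_le_sub_one_of_pos (by positivity : 0 < 1 + ‖w‖ ^ 2)
  rw [softLog]
  nlinarith [norm_nonneg w]

lemma neg_log_one_sub_norm_nonneg {z : ℂ} (hz : z ∈ ball (0 : ℂ) 1) :
    0 ≤ -Real.log (1 - ‖z‖) := by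
  have hz₁ := mem_ball_zero_iff.mp hz
  linarith [Real.log_nonpos (sub_nonneg.mpr hz₁.le) (by linarith [norm_nonneg z])]

variable {f : ℂ → ℂ} {p : ℕ} {u : ℂ} {h K E X Y : ℝ}

lemma mul_stripMap_mem_ball (hu : ‖u‖ = 1) {w : ℂ} (hw : |w.im| < π / 2) :
    u * stripMap w ∈ ball (0 : ℂ) 1 := by
  rw [mem_ball_zero_iff, norm_mul, hu, one_mul]
  exact norm_stripMap_lt_one hw

lemma analyticOnNhd_comp_stripMap (hf : AnalyticOnNhd ℂ f (ball 0 1)) (hu : ‖u‖ = 1) :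
    AnalyticOnNhd ℂ (fun w => f (u * stripMap w)) {w | |w.im| < π / 2} := fun _ hw =>
  AnalyticAt.fun_comp (f := fun w => u * stripMap w) (hf _ (mul_stripMap_mem_ball hu hw))
    (analyticAt_const.mul (analyticAt_stripMap hw))

lemma PValentOn.comp_stripMap (hp : PValentOn f (ball 0 1) p) (hu : ‖u‖ = 1) :
    PValentOn (fun w => f (u * stripMap w)) {w | |w.im| < π / 2} p := by
  have hu₀ : u ≠ 0 := norm_ne_zero_iff.mp (by rw [hu]; exact one_ne_zero)
  exact hp.comp (fun w hw z hz hwz => injOn_stripMap hw hz (mul_left_cancel₀ hu₀ hwz))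
    fun w hw => mul_stripMap_mem_ball hu hw

lemma HasLogGrowth.softLog_stripMap_le (hfK : HasLogGrowth f K E) (hK : 0 ≤ K) (hu : ‖u‖ = 1)
    (hh : h < π / 2) {w : ℂ} (hw : |w.im| ≤ h) :
    softLog (f (u * stripMap w)) ≤ K * (|w.re| + Real.log (2 / Real.cos h) + E) := by
  refine (hfK _ (mul_stripMap_mem_ball hu (hw.trans_lt hh))).trans ?_
  rw [norm_mul, hu, one_mul]
  gcongr
  linarith [neg_log_one_sub_norm_stripMap_le hh hw]

lemma HasLogGrowth.logEnergy_stripMap_le (hfK : HasLogGrowth f K E) (hK : 0 ≤ K) (hu : ‖u‖ = 1)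
    (hf : AnalyticOnNhd ℂ f (ball 0 1)) (hp : PValentOn f (ball 0 1) p) (hX : 0 ≤ X)
    (hh : h < π / 2) (hY : 0 ≤ Y) (hXY : X + 1 / 8 + Real.log (2 / Real.cos h) + E ≤ Y) :
    logEnergy (fun w => f (u * stripMap w)) (Icc (-(1 / 8)) (X + 1 / 8) ×ℂ Icc (-h) h) ≤
      ENNReal.ofReal (2 * π * p * (K * Y)) := by
  have him : ∀ w ∈ Icc (-(1 / 8)) (X + 1 / 8) ×ℂ Icc (-h) h, |w.im| ≤ h :=
    fun w hw => abs_le.mpr hw.2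
  have hstrip : Icc (-(1 / 8)) (X + 1 / 8) ×ℂ Icc (-h) h ⊆ {w : ℂ | |w.im| < π / 2} :=
    fun w hw => (him w hw).trans_lt hh
  refine ((hp.comp_stripMap hu).mono hstrip).logEnergy_le
    (isCompact_Icc.reProdIm isCompact_Icc).measurableSet
    (fun w hw => (analyticOnNhd_comp_stripMap hf hu w (hstrip hw)).differentiableAt)
    (mul_nonneg hK hY) fun w hw => (hfK.softLog_stripMap_le hK hu hh (him w hw)).trans ?_
  have hre : |w.re| ≤ X + 1 / 8 := abs_le.mpr ⟨by linarith [hw.1.1], hw.1.2⟩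
  gcongr
  linarith

lemma length_area_error_le {D : ℝ} (hD : 0 ≤ D) (h₁ : 1 ≤ h) (h₂ : h ≤ 2) :
    √(h * D / (1 / 8)) + √(2 * h * D / (1 / 8)) + √(2 * (1 / 8) * D / h) ≤ 11 * √D := by
  have hfirst : √(h * D / (1 / 8)) ≤ 4 * √D := by
    refine Real.sqrt_le_iff.mpr ⟨by positivity, ?_⟩
    rw [mul_pow, Real.sq_sqrt hD]
    nlinarith
  have hsecond : √(2 * h * D / (1 / 8)) ≤ 6 * √D := by
    refine Real.sqrt_le_iff.mpr ⟨by positivity, ?_⟩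
    rw [mul_pow, Real.sq_sqrt hD]
    nlinarith
  have hthird : √(2 * (1 / 8) * D / h) ≤ 1 * √D := by
    refine Real.sqrt_le_iff.mpr ⟨by positivity, ?_⟩
    rw [mul_pow, Real.sq_sqrt hD, div_le_iff₀ (by linarith)]
    nlinarith
  linarith

lemma exists_norm_eq_one_mul_norm (z : ℂ) : ∃ u : ℂ, ‖u‖ = 1 ∧ u * ‖z‖ = z :=
  ⟨cexp (z.arg * I), norm_exp_ofReal_mul_I _, by rw [mul_comm, norm_mul_exp_arg_mul_I]⟩

lemma log_div_one_sub_le {r : ℝ} (hr₀ : 0 ≤ r) (hr₁ : r < 1) :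
    Real.log ((1 + r) / (1 - r)) ≤ Real.log 2 - Real.log (1 - r) := by
  rw [Real.log_div (by linarith) (by linarith)]
  gcongr
  linarith

lemma HasLogGrowth.softLog_le (hfK : HasLogGrowth f K E) (hK : 0 ≤ K) (hE : 0 ≤ E)
    (hf : AnalyticOnNhd ℂ f (ball 0 1)) (hp : PValentOn f (ball 0 1) p)
    (hf₁ : ∀ z ∈ ball (0 : ℂ) (1 / 4), ‖f z‖ ≤ 1) (h₁ : 1 ≤ h) (hh : h < π / 2) {z : ℂ}
    (hz : z ∈ ball (0 : ℂ) 1)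
    (hY : E - Real.log (1 - ‖z‖) + (Real.log 2 + Real.log (2 / Real.cos h) + 1 / 4) ≤ Y) :
    softLog (f z) ≤ 1 + √(Y * (2 * π * p * (K * Y)) / (2 * h)) +
      11 * √(2 * π * p * (K * Y)) := by
  obtain ⟨u, hu, huz⟩ := exists_norm_eq_one_mul_norm z
  have hr : ‖z‖ < 1 := mem_ball_zero_iff.mp hz
  let X := Real.log ((1 + ‖z‖) / (1 - ‖z‖))
  have hX₀ : 0 ≤ X :=
    Real.log_nonneg (by rw [le_div_iff₀ (by linarith)]; linarith [norm_nonneg z])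
  have hXle : X ≤ Real.log 2 - Real.log (1 - ‖z‖) := log_div_one_sub_le (norm_nonneg z) hr
  have hlogcos : 0 ≤ Real.log (2 / Real.cos h) := log_two_div_cos_nonneg (by linarith) hh
  have hY₀ : 0 ≤ Y := by linarith
  have hD₀ : 0 ≤ 2 * π * p * (K * Y) := by positivity
  have hF : AnalyticOnNhd ℂ (fun w => f (u * stripMap w))
      (Icc (-(1 / 8)) (X + 1 / 8) ×ℂ Icc (-h) h) :=
    (analyticOnNhd_comp_stripMap hf hu).mono fun w hw => (abs_le.mpr hw.2).trans_lt hh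
  have hstart : ∀ x ∈ Icc (-(1 / 8)) (1 / 8 : ℝ), softLog (f (u * stripMap x)) ≤ 1 :=
    fun x hx => softLog_le_one <| hf₁ _ <| by
      rw [mem_ball_zero_iff, norm_mul, hu, one_mul]
      exact norm_stripMap_ofReal_lt (abs_le.mpr hx)
  have hmain := softLog_le_of_logEnergy_rectangle hX₀ (by norm_num) (by linarith) hD₀ hF
    (hfK.logEnergy_stripMap_le hK hu hf hp hX₀ hh hY₀ (by linarith)) hstart
  rw [stripMap_log (norm_nonneg z) hr, huz] at hmain
  have herror := length_area_error_le hD₀ h₁ (by linarith [Real.pi_lt_four])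
  have hmono : √((X + 2 * (1 / 8)) * (2 * π * p * (K * Y)) / (2 * h)) ≤
      √(Y * (2 * π * p * (K * Y)) / (2 * h)) := by
    gcongr
    linarith
  linarith

lemma exists_one_le_forall_add_sqrt_le {a a' : ℝ} (ha : a < a') (b c : ℝ) :
    ∃ E : ℝ, 1 ≤ E ∧ ∀ Y ≥ E, 1 + a * (Y + c) + b * √(Y + c) ≤ a' * Y := by
  have hlin : Filter.Tendsto (fun t : ℝ => (a' - a) * √t - b) .atTop .atTop :=
    Filter.tendsto_atTop_add_const_right _ _
      (Real.tendsto_sqrt_atTop.const_mul_atTop (sub_pos.mpr ha))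
  have hquad := Real.tendsto_sqrt_atTop.atTop_mul_atTop₀ hlin
  have hev := (hquad.comp (Filter.tendsto_atTop_add_const_right .atTop c
    Filter.tendsto_id)).eventually_ge_atTop (1 + a' * c)
  obtain ⟨E, hE⟩ := Filter.eventually_atTop.mp (hev.and (Filter.eventually_ge_atTop (-c)))
  refine ⟨max 1 E, le_max_left _ _, fun Y hY => ?_⟩
  obtain ⟨hlarge, hYc⟩ := hE Y ((le_max_right _ _).trans hY)
  simp only [Function.comp_apply, id] at hlarge
  nlinarith [Real.sq_sqrt (by linarith : 0 ≤ Y + c)]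

-- In a strip of half-width `h = 2πp / (4p + 1) < π / 2` the length-area bound reads
-- `√K * √(2p + 1/2) * Y + O(√Y)`; the remainder is absorbed in `2p + 1` by enlarging `E`.
lemma exists_hasLogGrowth_sqrt (hp₁ : 1 ≤ p) : ∃ E : ℝ, 1 ≤ E ∧ ∀ f : ℂ → ℂ,
    AnalyticOnNhd ℂ f (ball 0 1) → PValentOn f (ball 0 1) p →
    (∀ z ∈ ball (0 : ℂ) (1 / 4), ‖f z‖ ≤ 1) →
    ∀ K : ℝ, 1 ≤ K → HasLogGrowth f K E → HasLogGrowth f √(K * (2 * p + 1)) E := by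
  have hpR : (1 : ℝ) ≤ p := by exact_mod_cast hp₁
  have hπ := Real.pi_gt_three
  let h := 2 * π * p / (4 * p + 1)
  have h₁ : 1 ≤ h := by rw [le_div_iff₀ (by positivity)]; nlinarith
  have hh : h < π / 2 := by rw [div_lt_div_iff₀ (by positivity) (by norm_num)]; nlinarith
  have hlogcos : 0 ≤ Real.log (2 / Real.cos h) := log_two_div_cos_nonneg (by linarith) hh
  let c := Real.log 2 + Real.log (2 / Real.cos h) + 1 / 4
  have hc : 0 ≤ c := by positivity
  obtain ⟨E, hE₁, hE⟩ := exists_one_le_forall_add_sqrt_le (a := √(2 * p + 1 / 2))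
    (a' := √(2 * p + 1)) (Real.sqrt_lt_sqrt (by positivity) (by linarith)) (11 * √(2 * π * p)) c
  refine ⟨E, hE₁, fun f hf hp hf₁ K hK hfK z hz => ?_⟩
  have hlog := neg_log_one_sub_norm_nonneg hz
  let Y := E - Real.log (1 - ‖z‖)
  have hY : E ≤ Y := by linarith
  have hYc : 0 ≤ Y + c := by linarith
  have hmain : √((Y + c) * (2 * π * p * (K * (Y + c))) / (2 * h)) =
      √K * (√(2 * p + 1 / 2) * (Y + c)) := by
    rw [show (Y + c) * (2 * π * p * (K * (Y + c))) / (2 * h) =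
      K * ((2 * p + 1 / 2) * (Y + c) ^ 2) by simp only [h]; field_simp; ring,
      Real.sqrt_mul (by linarith), Real.sqrt_mul (by positivity), Real.sqrt_sq hYc]
  have herror : √(2 * π * p * (K * (Y + c))) = √K * (√(2 * π * p) * √(Y + c)) := by
    rw [mul_left_comm, Real.sqrt_mul (by linarith), Real.sqrt_mul (by positivity)]
  calc softLog (f z)
      ≤ 1 + √((Y + c) * (2 * π * p * (K * (Y + c))) / (2 * h)) +
          11 * √(2 * π * p * (K * (Y + c))) :=
        hfK.softLog_le (by linarith) (by linarith) hf hp hf₁ h₁ hh hz le_rfl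
    _ ≤ √K * (1 + √(2 * p + 1 / 2) * (Y + c) + 11 * √(2 * π * p) * √(Y + c)) := by
        rw [hmain, herror]
        linarith [Real.one_le_sqrt.mpr hK]
    _ ≤ √K * (√(2 * p + 1) * Y) := by gcongr; exact hE Y hY
    _ = √(K * (2 * p + 1)) * Y := by rw [Real.sqrt_mul (by linarith), mul_assoc]

-- Iterating `K ↦ √(K * κ)` from `κ * r` gives `κ * r ^ (2 ^ (-n))`, which tends to `κ`.
lemma HasLogGrowth.of_sqrt_step {κ r : ℝ} (hκ : 1 ≤ κ) (hr : 1 ≤ r)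
    (hfr : HasLogGrowth f (κ * r) E)
    (hstep : ∀ K : ℝ, 1 ≤ K → HasLogGrowth f K E → HasLogGrowth f √(K * κ) E) :
    HasLogGrowth f κ E := by
  have hiter (n : ℕ) : HasLogGrowth f (κ * r ^ ((1 / 2 : ℝ) ^ n)) E := by
    induction n with
    | zero => simpa using hfr
    | succ n ih =>
      have hroot : 1 ≤ r ^ ((1 / 2 : ℝ) ^ n) := Real.one_le_rpow hr (by positivity)
      have hsqrt : √(κ * r ^ ((1 / 2 : ℝ) ^ n) * κ) = κ * r ^ ((1 / 2 : ℝ) ^ (n + 1)) := by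
        rw [Real.sqrt_eq_iff_mul_self_eq (by positivity) (by positivity), mul_mul_mul_comm,
          ← Real.rpow_add (by positivity), pow_succ]
        ring_nf
      exact hsqrt ▸ hstep _ (one_le_mul_of_one_le_of_one_le hκ hroot) ih
  have hlim : Filter.Tendsto (fun n : ℕ => κ * r ^ ((1 / 2 : ℝ) ^ n)) .atTop (nhds κ) := by
    have hpow := tendsto_pow_atTop_nhds_zero_of_lt_one (r := (1 / 2 : ℝ)) (by norm_num)
      (by norm_num)
    simpa using ((tendsto_const_nhds (x := r)).rpow hpow (.inl (by positivity))).const_mul κ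
  exact fun z hz => ge_of_tendsto (hlim.mul_const _) (.of_forall fun n => hiter n z hz)

lemma hasLogGrowth_of_bounded {M : ℝ} (hE : 1 ≤ E) (hM : ∀ z ∈ ball (0 : ℂ) 1, ‖f z‖ ≤ M)
    (hK : 1 / 2 * Real.log (1 + M ^ 2) ≤ K) : HasLogGrowth f K E := by
  intro z hz
  have hsoft : softLog (f z) ≤ K := by
    refine le_trans ?_ hK
    rw [softLog]
    gcongr
    exact hM z hz
  exact hsoft.trans (le_mul_of_one_le_right ((softLog_nonneg _).trans hsoft)
    (by linarith [neg_log_one_sub_norm_nonneg hz]))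

lemma HasLogGrowth.norm_le {n : ℕ} (hfn : HasLogGrowth f n E) {z : ℂ}
    (hz : z ∈ ball (0 : ℂ) 1) : ‖f z‖ ≤ rexp (n * E) / (1 - ‖z‖) ^ n := by
  have hpos : 0 < 1 - ‖z‖ := sub_pos.mpr (mem_ball_zero_iff.mp hz)
  refine (norm_le_exp_softLog _).trans ((Real.exp_le_exp.mpr (hfn z hz)).trans_eq ?_)
  rw [mul_sub, Real.exp_sub, Real.exp_nat_mul (Real.log _), Real.exp_log hpos]

lemma exists_norm_le_of_bounded (hp₁ : 1 ≤ p) : ∃ C : ℝ, 0 < C ∧ ∀ f : ℂ → ℂ,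
    AnalyticOnNhd ℂ f (ball 0 1) → PValentOn f (ball 0 1) p →
    (∃ B, ∀ z ∈ ball (0 : ℂ) 1, ‖f z‖ ≤ B) →
    ∀ M : ℝ, 0 < M → (∀ z ∈ ball (0 : ℂ) (1 / 4), ‖f z‖ ≤ M) →
    ∀ z ∈ ball (0 : ℂ) 1, ‖f z‖ ≤ C * M / (1 - ‖z‖) ^ (2 * p + 1) := by
  obtain ⟨E, hE₁, hE⟩ := exists_hasLogGrowth_sqrt hp₁
  refine ⟨rexp ((2 * p + 1 : ℕ) * E), Real.exp_pos _, fun f hf hp ⟨B, hB⟩ M hM hfM z hz => ?_⟩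
  have hnorm (z : ℂ) : ‖f z / M‖ = ‖f z‖ / M := by rw [norm_div, Complex.norm_of_nonneg hM.le]
  have hκ : (1 : ℝ) ≤ (2 * p + 1 : ℕ) := by push_cast; linarith [p.cast_nonneg (α := ℝ)]
  have hL : 0 ≤ 1 / 2 * Real.log (1 + (B / M) ^ 2) := by
    linarith [Real.log_nonneg (by nlinarith [sq_nonneg (B / M)] : 1 ≤ 1 + (B / M) ^ 2)]
  have hbase : HasLogGrowth (fun z => f z / M)
      ((2 * p + 1 : ℕ) * (1 + 1 / 2 * Real.log (1 + (B / M) ^ 2))) E :=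
    hasLogGrowth_of_bounded (M := B / M) hE₁ (fun z hz => by
      rw [hnorm]
      gcongr
      exact hB z hz) (by nlinarith)
  have hgrowth : HasLogGrowth (fun z => f z / M) (2 * p + 1 : ℕ) E :=
    hbase.of_sqrt_step hκ (by linarith) fun K hK hfK => by
      simpa using hE _ (fun z hz => (hf z hz).div_const)
        (hp.div_const (ofReal_ne_zero.mpr hM.ne'))
        (fun z hz => by rw [hnorm, div_le_one hM]; exact hfM z hz) K hK hfK
  have hbound := hgrowth.norm_le hz
  rwa [hnorm, div_le_iff₀ hM, div_mul_eq_mul_div] at hbound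

lemma add_mul_mem_ball_iff {z₀ t : ℂ} {R ρ : ℝ} (hR : 0 < R) :
    z₀ + R * t ∈ ball z₀ (ρ * R) ↔ t ∈ ball (0 : ℂ) ρ := by
  rw [mem_ball_iff_norm, add_sub_cancel_left, norm_mul, Complex.norm_of_nonneg hR.le, mul_comm,
    mul_lt_mul_iff_left₀ hR, mem_ball_zero_iff]

lemma mapsTo_add_mul_ball (z₀ : ℂ) {R : ℝ} (hR : 0 < R) :
    MapsTo (fun t => z₀ + R * t) (ball 0 1) (ball z₀ R) := fun t ht => by
  have hmem := (add_mul_mem_ball_iff (z₀ := z₀) hR).mpr ht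
  rwa [one_mul] at hmem

lemma PValentOn.comp_affine {z₀ : ℂ} {R : ℝ} (hR : 0 < R) (hp : PValentOn f (ball z₀ R) p) :
    PValentOn (fun t => f (z₀ + R * t)) (ball 0 1) p := by
  have hRC : (R : ℂ) ≠ 0 := ofReal_ne_zero.mpr hR.ne'
  exact hp.comp (fun s _ t _ hst => mul_left_cancel₀ hRC (add_left_cancel hst))
    (mapsTo_add_mul_ball z₀ hR)

lemma analyticOnNhd_comp_affine {z₀ : ℂ} {R : ℝ} (hR : 0 < R)
    (hf : AnalyticOnNhd ℂ f (ball z₀ R)) :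
    AnalyticOnNhd ℂ (fun t => f (z₀ + R * t)) (ball 0 1) :=
  hf.comp (fun t _ => by fun_prop) (mapsTo_add_mul_ball z₀ hR)

-- Restricting `f` to the disc of radius `(1 + ‖z‖) / 2` makes it bounded, at the cost of a
-- factor `2` in `1 - ‖z‖`.
lemma exists_norm_le_of_norm_le_ball (hp₁ : 1 ≤ p) : ∃ C : ℝ, 0 < C ∧ ∀ f : ℂ → ℂ,
    AnalyticOnNhd ℂ f (ball 0 1) → PValentOn f (ball 0 1) p →
    ∀ M : ℝ, 0 < M → (∀ z ∈ ball (0 : ℂ) (1 / 4), ‖f z‖ ≤ M) →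
    ∀ z ∈ ball (0 : ℂ) 1, ‖f z‖ ≤ C * M / (1 - ‖z‖) ^ (2 * p + 1) := by
  obtain ⟨C, hC₀, hC⟩ := exists_norm_le_of_bounded hp₁
  refine ⟨C * 2 ^ (2 * p + 1), by positivity, fun f hf hp M hM hfM z hz => ?_⟩
  have hr : ‖z‖ < 1 := mem_ball_zero_iff.mp hz
  obtain ⟨R, hR⟩ : ∃ R : ℝ, R = (1 + ‖z‖) / 2 := ⟨_, rfl⟩
  have hR₀ : 0 < R := by linarith [norm_nonneg z]
  have hR₁ : R < 1 := by linarith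
  have hsub : ball (0 : ℂ) R ⊆ ball 0 1 := ball_subset_ball hR₁.le
  obtain ⟨B, hB⟩ := (isCompact_closedBall (0 : ℂ) R).exists_bound_of_continuousOn
    (hf.continuousOn.mono (closedBall_subset_ball hR₁))
  have hbound : ‖f z‖ ≤ C * M / (1 - ‖z‖ / R) ^ (2 * p + 1) := by
    have hscaled := hC (fun t => f (0 + R * t)) (analyticOnNhd_comp_affine hR₀ (hf.mono hsub))
      ((hp.mono hsub).comp_affine hR₀)
      ⟨B, fun w hw => hB _ (ball_subset_closedBall (mapsTo_add_mul_ball 0 hR₀ hw))⟩ M hM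
      (fun w hw => hfM _ (ball_subset_ball (by linarith) ((add_mul_mem_ball_iff hR₀).mpr hw)))
      (z / R) (by
        rw [mem_ball_zero_iff, norm_div, Complex.norm_of_nonneg hR₀.le, div_lt_one hR₀]
        linarith)
    rwa [zero_add, mul_div_cancel₀ z (ofReal_ne_zero.mpr hR₀.ne'), norm_div,
      Complex.norm_of_nonneg hR₀.le] at hscaled
  have hdist : (1 - ‖z‖) / 2 ≤ 1 - ‖z‖ / R := by
    rw [le_sub_comm, div_le_iff₀ hR₀]
    nlinarith [sq_nonneg (1 - ‖z‖)]
  have hpos : 0 < 1 - ‖z‖ := by linarith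
  calc ‖f z‖ ≤ C * M / (1 - ‖z‖ / R) ^ (2 * p + 1) := hbound
    _ ≤ C * M / ((1 - ‖z‖) / 2) ^ (2 * p + 1) := by gcongr
    _ = C * 2 ^ (2 * p + 1) * M / (1 - ‖z‖) ^ (2 * p + 1) := by rw [div_pow]; field_simp

end Growth

section Zeros

variable {G k : ℂ → ℂ} {U V : Set ℂ} {p : ℕ} {N β : ℝ}

lemma exists_eq_prod_sub_mul_of_simple_zeros (hU : IsOpen U) (hVU : V ⊆ U) (s : Finset ℂ)
    (hG : DifferentiableOn ℂ G U) (hs : ∀ a, a ∈ s ↔ a ∈ V ∧ G a = 0)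
    (hsimple : ∀ a ∈ s, deriv G a ≠ 0) :
    ∃ k : ℂ → ℂ, DifferentiableOn ℂ k U ∧ (∀ z ∈ V, k z ≠ 0) ∧
      ∀ z, G z = (∏ a ∈ s, (z - a)) * k z := by
  induction s using Finset.induction_on generalizing G with
  | empty => exact ⟨G, hG, fun z hz h₀ => by simpa using (hs z).mpr ⟨hz, h₀⟩, by simp⟩
  | insert a s ha ih =>
    obtain ⟨haV, hGa⟩ := (hs a).mp (Finset.mem_insert_self a s)
    have haU : U ∈ nhds a := hU.mem_nhds (hVU haV)
    have hfactor (z : ℂ) : G z = (z - a) * dslope G a z := by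
      rw [← smul_eq_mul, sub_smul_dslope, hGa, sub_zero]
    have hdslope : DifferentiableOn ℂ (dslope G a) U := (differentiableOn_dslope haU).mpr hG
    have hzeros (b : ℂ) : b ∈ s ↔ b ∈ V ∧ dslope G a b = 0 := by
      rcases eq_or_ne b a with rfl | hba
      · simp [ha, dslope_same, hsimple b (Finset.mem_insert_self b s)]
      · have hmem := hs b
        rw [Finset.mem_insert, or_iff_right hba, hfactor, mul_eq_zero,
          or_iff_right (sub_ne_zero.mpr hba)] at hmem
        exact hmem
    have hderiv (b : ℂ) (hb : b ∈ s) : deriv (dslope G a) b ≠ 0 := fun hzero => by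
      obtain ⟨hbV, hb₀⟩ := (hzeros b).mp hb
      have hdiff := (hdslope.differentiableAt (hU.mem_nhds (hVU hbV))).hasDerivAt
      have hprod := ((hasDerivAt_id b).sub_const a).mul hdiff
      refine hsimple b (Finset.mem_insert_of_mem hb) ?_
      rw [show G = (id - fun _ => a) * dslope G a from funext hfactor]
      exact hprod.deriv.trans (by simp [hb₀, hzero])
    obtain ⟨k, hk, hkV, hkG⟩ := ih hdslope hzeros hderiv
    exact ⟨k, hk, hkV, fun z => by rw [hfactor, hkG, Finset.prod_insert ha, mul_assoc]⟩

lemma harnack_lower {u : ℂ → ℝ} {c w : ℂ} {R : ℝ}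
    (hu : InnerProductSpace.HarmonicOnNhd u (closedBall c R))
    (hnonneg : ∀ z ∈ sphere c R, 0 ≤ u z) (hw : w ∈ ball c R) :
    (R - ‖w - c‖) / (R + ‖w - c‖) * u c ≤ u w := by
  have hR : |R| = R := abs_of_pos (pos_of_mem_ball hw)
  have hcont : ContinuousOn u (sphere c |R|) := by
    rw [hR]; exact hu.continuousOn.mono sphere_subset_closedBall
  have hkernel : ContinuousOn (re ∘ herglotzRieszKernel c w) (sphere c |R|) :=
    continuous_re.comp_continuousOn (continuousOn_herglotzRieszKernel_sphere hw)
  calc (R - ‖w - c‖) / (R + ‖w - c‖) * u c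
      = Real.circleAverage (((R - ‖w - c‖) / (R + ‖w - c‖)) • u) c R := by
        rw [Real.circleAverage_smul,
          InnerProductSpace.HarmonicOnNhd.circleAverage_eq (by rwa [hR]), smul_eq_mul]
    _ ≤ Real.circleAverage ((re ∘ herglotzRieszKernel c w) • u) c R := by
        refine Real.circleAverage_mono (hcont.const_smul _).circleIntegrable'
          (hkernel.smul hcont).circleIntegrable' fun z hz => ?_
        rw [hR] at hz
        exact mul_le_mul_of_nonneg_right (le_re_herglotzRieszKernel hz hw) (hnonneg z hz)
    _ = u w := hu.circleAverage_re_herglotzRieszKernel_smul hw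

lemma norm_pow_three_le_of_ne_zero {c w : ℂ} {R : ℝ} (hR : 0 < R)
    (hk : AnalyticOnNhd ℂ k (closedBall c R)) (hk₀ : ∀ z ∈ closedBall c R, k z ≠ 0)
    (hkN : ∀ z ∈ closedBall c R, ‖k z‖ ≤ N) (hw : w ∈ closedBall c (R / 2)) :
    ‖k w‖ ^ 3 ≤ N ^ 2 * ‖k c‖ := by
  have hwR : w ∈ ball c R := closedBall_subset_ball (half_lt_self hR) hw
  have hkc : 0 < ‖k c‖ := norm_pos_iff.mpr (hk₀ c (mem_closedBall_self hR.le))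
  have hkw : 0 < ‖k w‖ := norm_pos_iff.mpr (hk₀ w (ball_subset_closedBall hwR))
  have hN : 0 < N := hkc.trans_le (hkN c (mem_closedBall_self hR.le))
  have hnorm (z : ℂ) : ‖(N : ℂ) / k z‖ = N / ‖k z‖ := by
    rw [norm_div, Complex.norm_of_nonneg hN.le]
  have hnonneg (z : ℂ) (hz : z ∈ closedBall c R) : 0 ≤ Real.log ‖(N : ℂ) / k z‖ := by
    rw [hnorm]
    exact Real.log_nonneg ((one_le_div (norm_pos_iff.mpr (hk₀ z hz))).mpr (hkN z hz))
  have hharmonic :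
      InnerProductSpace.HarmonicOnNhd (fun z => Real.log ‖(N : ℂ) / k z‖) (closedBall c R) :=
    fun z hz => (analyticAt_const.div (hk z hz) (hk₀ z hz)).harmonicAt_log_norm
      (div_ne_zero (ofReal_ne_zero.mpr hN.ne') (hk₀ z hz))
  have hthird : 1 / 3 ≤ (R - ‖w - c‖) / (R + ‖w - c‖) := by
    rw [mem_closedBall_iff_norm] at hw
    rw [div_le_div_iff₀ (by norm_num) (by positivity)]
    linarith
  have hlog : Real.log (N / ‖k c‖) ≤ Real.log ((N / ‖k w‖) ^ 3) := by
    have hle := (mul_le_mul_of_nonneg_right hthird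
      (hnonneg c (mem_closedBall_self hR.le))).trans (harnack_lower hharmonic
        (fun z hz => hnonneg z (sphere_subset_closedBall hz)) hwR)
    rw [hnorm, hnorm] at hle
    rw [Real.log_pow]
    push_cast
    linarith
  have hdiv := (Real.log_le_log_iff (by positivity) (by positivity)).mp hlog
  rw [div_pow, div_le_div_iff₀ hkc (by positivity)] at hdiv
  exact le_of_mul_le_mul_left (by linarith) hN

lemma norm_le_of_eq_prod_sub_mul {s : Finset ℂ} (hcard : s.card ≤ p)
    (hs : ∀ a ∈ s, a ∈ closedBall 0 (1 / 2)) (hk : DifferentiableOn ℂ k (ball 0 1))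
    (hkG : ∀ z, G z = (∏ a ∈ s, (z - a)) * k z) (hN : ∀ z ∈ closedBall 0 (3 / 4), ‖G z‖ ≤ N)
    {z : ℂ} (hz : z ∈ closedBall 0 (3 / 4)) : ‖k z‖ ≤ 4 ^ p * N := by
  have hclosure : closure (ball (0 : ℂ) (3 / 4)) = closedBall 0 (3 / 4) :=
    closure_ball 0 (by norm_num)
  have hdiff : DiffContOnCl ℂ k (ball 0 (3 / 4)) :=
    (hk.mono (hclosure ▸ closedBall_subset_ball (by norm_num))).diffContOnCl
  refine Complex.norm_le_of_forall_mem_frontier_norm_le isBounded_ball hdiff (fun ζ hζ => ?_)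
    (hclosure ▸ hz)
  rw [frontier_ball 0 (by norm_num)] at hζ
  have hprod : (1 / 4 : ℝ) ^ p ≤ ‖∏ a ∈ s, (ζ - a)‖ := by
    have hfactor (a : ℂ) (ha : a ∈ s) : 1 / 4 ≤ ‖ζ - a‖ := by
      have ha' := mem_closedBall_zero_iff.mp (hs a ha)
      linarith [norm_sub_norm_le ζ a, mem_sphere_zero_iff_norm.mp hζ]
    calc (1 / 4 : ℝ) ^ p ≤ (1 / 4) ^ s.card :=
          pow_le_pow_of_le_one (by norm_num) (by norm_num) hcard
      _ = ∏ _a ∈ s, (1 / 4 : ℝ) := (Finset.prod_const _).symm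
      _ ≤ ‖∏ a ∈ s, (ζ - a)‖ := by
        rw [norm_prod]; exact Finset.prod_le_prod (fun _ _ => by norm_num) hfactor
  calc ‖k ζ‖ = 4 ^ p * ((1 / 4) ^ p * ‖k ζ‖) := by
        rw [← mul_assoc, ← mul_pow]; norm_num
    _ ≤ 4 ^ p * ‖G ζ‖ := by rw [hkG, norm_mul]; gcongr
    _ ≤ 4 ^ p * N := by gcongr; exact hN ζ (sphere_subset_closedBall hζ)

lemma norm_pow_three_le_of_simple_zeros {s : Finset ℂ} (hcard : s.card ≤ p)
    (hG : DifferentiableOn ℂ G (ball 0 1))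
    (hs : ∀ a, a ∈ s ↔ a ∈ closedBall 0 (1 / 2) ∧ G a = 0)
    (hsimple : ∀ a ∈ s, deriv G a ≠ 0) (hβ : 0 < β) (hβ₁ : β ≤ 1) (hsβ : ∀ a ∈ s, β ≤ ‖a‖)
    (hN : ∀ z ∈ closedBall 0 (3 / 4), ‖G z‖ ≤ N) {z : ℂ} (hz : z ∈ closedBall 0 (1 / 4)) :
    ‖G z‖ ^ 3 ≤ (4 ^ p * N) ^ 2 * (‖G 0‖ / β ^ p) := by
  obtain ⟨k, hk, hk₀, hkG⟩ := exists_eq_prod_sub_mul_of_simple_zeros isOpen_ball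
    (closedBall_subset_ball (by norm_num)) s hG hs hsimple
  have hs_half (a : ℂ) (ha : a ∈ s) : a ∈ closedBall (0 : ℂ) (1 / 2) := ((hs a).mp ha).1
  have hGk : ‖G z‖ ≤ ‖k z‖ := by
    rw [hkG, norm_mul, norm_prod]
    refine mul_le_of_le_one_left (norm_nonneg _) (Finset.prod_le_one (fun _ _ => norm_nonneg _) ?_)
    intro a ha
    have ha' := mem_closedBall_zero_iff.mp (hs_half a ha)
    linarith [norm_sub_le z a, mem_closedBall_zero_iff.mp hz]
  have hkzero : ‖k 0‖ ≤ ‖G 0‖ / β ^ p := by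
    rw [le_div_iff₀ (by positivity), hkG, norm_mul, norm_prod, mul_comm]
    gcongr
    calc β ^ p ≤ β ^ s.card := pow_le_pow_of_le_one hβ.le hβ₁ hcard
      _ = ∏ _a ∈ s, β := (Finset.prod_const _).symm
      _ ≤ ∏ a ∈ s, ‖0 - a‖ := Finset.prod_le_prod (fun _ _ => hβ.le) fun a ha => by
        simpa using hsβ a ha
  calc ‖G z‖ ^ 3 ≤ ‖k z‖ ^ 3 := by gcongr
    _ ≤ (4 ^ p * N) ^ 2 * ‖k 0‖ := by
      refine norm_pow_three_le_of_ne_zero (R := 1 / 2) (by norm_num) ?_ hk₀ (fun w hw => ?_)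
        (by convert hz using 2; norm_num)
      · exact (hk.analyticOnNhd isOpen_ball).mono (closedBall_subset_ball (by norm_num))
      · exact norm_le_of_eq_prod_sub_mul hcard hs_half hk hkG hN
          (closedBall_subset_closedBall (by norm_num) hw)
    _ ≤ (4 ^ p * N) ^ 2 * (‖G 0‖ / β ^ p) := by gcongr

end Zeros

lemma exists_regular_value {f : ℂ → ℂ} {W U : Set ℂ} (hf : ∀ z ∈ W, DifferentiableAt ℂ f z)
    (hU : IsOpen U) (hUne : U.Nonempty) : ∃ c ∈ U, ∀ z ∈ W, f z = c → deriv f z ≠ 0 := by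
  have hnull : volume (f '' {z | z ∈ W ∧ deriv f z = 0}) = 0 := by
    refine addHaar_image_eq_zero_of_det_fderivWithin_eq_zero volume (f' := fun _ => 0)
      (fun z hz => ?_) fun z _ => by simp [ContinuousLinearMap.det]
    have hderiv := hz.2 ▸ (hf z hz.1).hasDerivAt
    exact (hderiv.hasFDerivAt.restrictScalars ℝ).hasFDerivWithinAt.congr_fderiv (by ext; simp)
  have hnot : ¬ U ⊆ f '' {z | z ∈ W ∧ deriv f z = 0} := fun hsub =>
    (hU.measure_pos volume hUne).ne' (measure_mono_null hsub hnull)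
  obtain ⟨c, hcU, hc⟩ := not_subset.mp hnot
  exact ⟨c, hcU, fun z hz hfz hd => hc ⟨z, ⟨hz, hd⟩, hfz⟩⟩

section Doubling

variable {f : ℂ → ℂ} {c : ℂ} {p : ℕ} {m β N : ℝ}

lemma PValentOn.norm_sub_pow_three_le (hp : PValentOn f (ball 0 1) p)
    (hf : DifferentiableOn ℂ f (ball 0 1)) (hc : ∀ z ∈ ball 0 1, f z = c → deriv f z ≠ 0)
    (hβ : 0 < β) (hβ₁ : β ≤ 1) (hcβ : ∀ z ∈ ball 0 β, f z ≠ c)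
    (hN : ∀ z ∈ closedBall 0 (3 / 4), ‖f z - c‖ ≤ N) {z : ℂ} (hz : z ∈ closedBall 0 (1 / 4)) :
    ‖f z - c‖ ^ 3 ≤ (4 ^ p * N) ^ 2 * (‖f 0 - c‖ / β ^ p) := by
  have hhalf : closedBall (0 : ℂ) (1 / 2) ⊆ ball 0 1 := closedBall_subset_ball (by norm_num)
  obtain ⟨s, hcard, hs⟩ := (hp.mono hhalf).exists_finset_fiber c
  refine norm_pow_three_le_of_simple_zeros (G := fun z => f z - c) hcard (hf.sub_const c)
    (fun a => by rw [hs, sub_eq_zero]) (fun a ha => ?_) hβ hβ₁ (fun a ha => ?_) hN hz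
  · rw [deriv_sub_const]
    exact hc a (hhalf ((hs a).mp ha).1) ((hs a).mp ha).2
  · by_contra! hlt
    exact hcβ a (mem_ball_zero_iff.mpr hlt) ((hs a).mp ha).2

lemma exists_regular_value_norm_mem_Ioo (hf : AnalyticOnNhd ℂ f (ball 0 1)) (hm : 0 < m) :
    ∃ c, ‖c‖ ∈ Ioo (2 * m) (3 * m) ∧ ∀ z ∈ ball 0 1, f z = c → deriv f z ≠ 0 :=
  exists_regular_value (U := norm ⁻¹' Ioo (2 * m) (3 * m)) (fun z hz => (hf z hz).differentiableAt)
    (isOpen_Ioo.preimage continuous_norm) ⟨((5 / 2 * m : ℝ) : ℂ), by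
      rw [mem_preimage, Complex.norm_of_nonneg (by positivity)]
      constructor <;> linarith⟩

lemma PValentOn.norm_le_of_norm_le_mul (hp : PValentOn f (ball 0 1) p)
    (hf : AnalyticOnNhd ℂ f (ball 0 1)) (hm : 0 < m) (hβ : 0 < β) (hβ₁ : β ≤ 1)
    (hfβ : ∀ z ∈ ball 0 β, ‖f z‖ ≤ m) {C : ℝ} {z : ℂ} (hz : z ∈ closedBall 0 (1 / 4))
    (hC : ∀ w ∈ closedBall 0 (3 / 4), ‖f w‖ ≤ C * ‖f z‖) (hmz : 6 * m ≤ ‖f z‖) :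
    ‖f z‖ ≤ 32 * (4 ^ p * (C + 1)) ^ 2 * (m / β ^ p) := by
  obtain ⟨c, ⟨hc₂, hc₃⟩, hreg⟩ := exists_regular_value_norm_mem_Ioo hf hm
  have hfz : 0 < ‖f z‖ := by linarith
  have hcβ (w : ℂ) (hw : w ∈ ball 0 β) : f w ≠ c := fun h => by
    have := hfβ w hw
    rw [h] at this
    linarith
  have hN (w : ℂ) (hw : w ∈ closedBall 0 (3 / 4)) : ‖f w - c‖ ≤ (C + 1) * ‖f z‖ := by
    linarith [norm_sub_le (f w) c, hC w hw]
  have hcube := hp.norm_sub_pow_three_le hf.differentiableOn hreg hβ hβ₁ hcβ hN hz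
  have hlower : ‖f z‖ / 2 ≤ ‖f z - c‖ := by linarith [norm_sub_norm_le (f z) c]
  have hzero : ‖f 0 - c‖ ≤ 4 * m := by
    linarith [norm_sub_le (f 0) c, hfβ 0 (mem_ball_self hβ)]
  refine le_of_mul_le_mul_left ?_ (by positivity : 0 < ‖f z‖ ^ 2)
  calc ‖f z‖ ^ 2 * ‖f z‖ = 8 * (‖f z‖ / 2) ^ 3 := by ring
    _ ≤ 8 * ‖f z - c‖ ^ 3 := by gcongr
    _ ≤ 8 * ((4 ^ p * ((C + 1) * ‖f z‖)) ^ 2 * (4 * m / β ^ p)) := by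
      refine mul_le_mul_of_nonneg_left (hcube.trans ?_) (by norm_num)
      gcongr
    _ = ‖f z‖ ^ 2 * (32 * (4 ^ p * (C + 1)) ^ 2 * (m / β ^ p)) := by ring

lemma exists_norm_le_on_closedBall_quarter (hp₁ : 1 ≤ p) :
    ∃ C, 0 < C ∧ ∀ f, AnalyticOnNhd ℂ f (ball 0 1) → PValentOn f (ball 0 1) p →
      ∀ m β, 0 < m → 0 < β → β ≤ 1 → (∀ z ∈ ball 0 β, ‖f z‖ ≤ m) →
        ∀ z ∈ closedBall 0 (1 / 4), ‖f z‖ ≤ C * (m / β ^ p) := by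
  obtain ⟨C, hC, hgrowth⟩ := exists_norm_le_of_norm_le_ball hp₁
  set C₃ := C * 4 ^ (2 * p + 1) with hC₃
  have hC₃_pos : 0 < C₃ := by positivity
  refine ⟨32 * (4 ^ p * (C₃ + 1)) ^ 2, by positivity, ?_⟩
  intro f hf hp m β hm hβ hβ₁ hfβ
  have hcont : ContinuousOn (fun z => ‖f z‖) (closedBall 0 (1 / 4)) :=
    (hf.continuousOn.mono (closedBall_subset_ball (by norm_num))).norm
  obtain ⟨z₁, hz₁, hmax⟩ := (isCompact_closedBall (0 : ℂ) (1 / 4)).exists_isMaxOn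
    ⟨0, mem_closedBall_self (by norm_num)⟩ hcont
  suffices hz₁_le : ‖f z₁‖ ≤ 32 * (4 ^ p * (C₃ + 1)) ^ 2 * (m / β ^ p) from
    fun z hz => (hmax hz).trans hz₁_le
  rcases lt_or_ge ‖f z₁‖ (6 * m) with hsmall | hlarge
  · have hmβ : m ≤ m / β ^ p := le_div_self hm.le (by positivity) (pow_le_one₀ hβ.le hβ₁)
    have hone : 1 ≤ (4 ^ p * (C₃ + 1)) ^ 2 := one_le_pow₀
      (one_le_mul_of_one_le_of_one_le (one_le_pow₀ (by norm_num)) (by linarith))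
    nlinarith
  · refine hp.norm_le_of_norm_le_mul hf hm hβ hβ₁ hfβ hz₁ (fun w hw => ?_) hlarge
    rw [mem_closedBall_zero_iff] at hw
    calc ‖f w‖ ≤ C * ‖f z₁‖ / (1 - ‖w‖) ^ (2 * p + 1) :=
          hgrowth f hf hp ‖f z₁‖ (by linarith) (fun z hz => hmax (ball_subset_closedBall hz)) w
            (mem_ball_zero_iff.mpr (by linarith))
      _ ≤ C * ‖f z₁‖ / (1 / 4) ^ (2 * p + 1) := by gcongr; linarith
      _ = C₃ * ‖f z₁‖ := by rw [hC₃, one_div, inv_pow, div_inv_eq_mul]; ring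

lemma exists_norm_le_of_norm_le_small_ball (hp₁ : 1 ≤ p) :
    ∃ C, 0 < C ∧ ∀ f, AnalyticOnNhd ℂ f (ball 0 1) → PValentOn f (ball 0 1) p →
      ∀ m β, 0 < m → 0 < β → β ≤ 1 → (∀ z ∈ ball 0 β, ‖f z‖ ≤ m) →
        ∀ z ∈ ball 0 1, ‖f z‖ ≤ C / (1 - ‖z‖) ^ (2 * p + 1) / β ^ p * m := by
  obtain ⟨C, hC, hgrowth⟩ := exists_norm_le_of_norm_le_ball hp₁
  obtain ⟨C', hC', hquarter⟩ := exists_norm_le_on_closedBall_quarter hp₁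
  refine ⟨C * C', by positivity, fun f hf hp m β hm hβ hβ₁ hfβ z hz => ?_⟩
  refine (hgrowth f hf hp (C' * (m / β ^ p)) (by positivity) (fun w hw =>
    hquarter f hf hp m β hm hβ hβ₁ hfβ w (ball_subset_closedBall hw)) z hz).trans_eq ?_
  ring

lemma exists_norm_le_of_norm_le_concentric (hp₁ : 1 ≤ p) :
    ∃ C, 0 < C ∧ ∀ α β, 0 < β → β ≤ 1 → α < 1 → ∀ z₀ R, 0 < R →
      ∀ f, AnalyticOnNhd ℂ f (ball z₀ R) → PValentOn f (ball z₀ R) p →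
        ∀ m, 0 ≤ m → (∀ w ∈ ball z₀ (β * R), ‖f w‖ ≤ m) →
          ∀ z ∈ ball z₀ (α * R), ‖f z‖ ≤ C / (1 - α) ^ (2 * p + 1) / β ^ p * m := by
  obtain ⟨C, hC, hunit⟩ := exists_norm_le_of_norm_le_small_ball hp₁
  refine ⟨C, hC, fun α β hβ hβ₁ hα z₀ R hR f hf hp m hm hfβ z hz => ?_⟩
  obtain ⟨t, rfl⟩ : ∃ t : ℂ, z₀ + R * t = z :=
    ⟨(z - z₀) / R, by rw [mul_div_cancel₀ _ (ofReal_ne_zero.mpr hR.ne'), add_sub_cancel]⟩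
  have ht : ‖t‖ < α := mem_ball_zero_iff.mp ((add_mul_mem_ball_iff hR).mp hz)
  have : 0 < 1 - α := by linarith
  have hlim : Filter.Tendsto (fun m' => C / (1 - α) ^ (2 * p + 1) / β ^ p * m')
      (nhdsWithin m (Ioi m)) (nhds (C / (1 - α) ^ (2 * p + 1) / β ^ p * m)) :=
    (continuous_const_mul _).continuousWithinAt
  refine ge_of_tendsto hlim (eventually_mem_nhdsWithin.mono fun m' (hm' : m < m') => ?_)
  calc ‖f (z₀ + R * t)‖ ≤ C / (1 - ‖t‖) ^ (2 * p + 1) / β ^ p * m' :=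
        hunit _ (analyticOnNhd_comp_affine hR hf) (PValentOn.comp_affine hR hp) m' β
          (hm.trans_lt hm') hβ hβ₁
          (fun w hw => (hfβ _ ((add_mul_mem_ball_iff hR).mpr hw)).trans hm'.le) t
          (mem_ball_zero_iff.mpr (ht.trans hα))
    _ ≤ C / (1 - α) ^ (2 * p + 1) / β ^ p * m' := by
      have : 0 < m' := hm.trans_lt hm'
      gcongr

end Doubling

/-- Doubling inequality for `p`-valent functions on concentric disks: there is a constant
`A'_p > 0` such that for `0 < β < α < 1` and `f` analytic and `p`-valent in a disk `D`,
`sup_{αD} |f| ≤ c_p(α,β) · sup_{βD} |f|` with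
`c_p(α,β) = ((p+1)α^p + A'_p/(1-α)^{2p+1})/β^p`. -/
theorem doubling_pvalent_concentric_disks (p : ℕ) (hp : 1 ≤ p) :
    ∃ A : ℝ, 0 < A ∧
      ∀ (α β : ℝ), 0 < β → β < α → α < 1 →
      ∀ (z₀ : ℂ) (R : ℝ), 0 < R →
      ∀ f : ℂ → ℂ, AnalyticOnNhd ℂ f (ball z₀ R) → PValentOn f (ball z₀ R) p →
        ∀ z ∈ ball z₀ (α * R),
          ‖f z‖ ≤ (((p : ℝ) + 1) * α ^ p + A / (1 - α) ^ (2 * p + 1)) / β ^ p *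
            sSup ((fun w => ‖f w‖) '' ball z₀ (β * R)) := by
  obtain ⟨A, hA, hbound⟩ := exists_norm_le_of_norm_le_concentric hp
  refine ⟨A, hA, fun α β hβ hβα hα z₀ R hR f hf hpf z hz => ?_⟩
  have hα₀ : 0 < α := hβ.trans hβα
  have hcont : ContinuousOn (fun w => ‖f w‖) (closedBall z₀ (β * R)) :=
    (hf.continuousOn.mono (closedBall_subset_ball (by nlinarith))).norm
  have hbdd : BddAbove ((fun w => ‖f w‖) '' ball z₀ (β * R)) :=
    ((isCompact_closedBall _ _).bddAbove_image hcont).mono (image_mono ball_subset_closedBall)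
  have hle (w : ℂ) (hw : w ∈ ball z₀ (β * R)) : ‖f w‖ ≤ sSup _ :=
    le_csSup hbdd (mem_image_of_mem _ hw)
  have hsup : 0 ≤ sSup ((fun w => ‖f w‖) '' ball z₀ (β * R)) :=
    (norm_nonneg _).trans (hle z₀ (mem_ball_self (by positivity)))
  refine (hbound α β hβ (hβα.trans hα).le hα z₀ R hR f hf hpf _ hsup hle z hz).trans ?_
  gcongr
  exact le_add_of_nonneg_left (by positivity)
end
end
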